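/- arXiv:2601.02274 — 4 statements merged into one kernel-verified Lean document; each statement's English description precedes it below -/
import Mathlib

section
/- Let h > 0, let φ ∈ C^∞(ℝ², ℝ), and let W ∈ C¹(ℝ², ℝ) be bounded with M := sup_{x ∈ ℝ²} |∇W(x) · ∇φ(x)| < ∞. For u ∈ C_c^∞(ℝ², ℂ) define P u := e^{φ/h}(−h²Δ + W)(e^{−φ/h} u), A u := e^{φ/h}(−h²Δ)(e^{−φ/h} u), and A* u := e^{−φ/h}(−h²Δ)(e^{φ/h} u). Then (1/h) ∫_{ℝ²} |P u|² ≥ (1/h) Re ∫_{ℝ²} (A*(A u) − A(A* u)) · conj(u) − 4M ∫_{ℝ²} |u|². -/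
open MeasureTheory Metric Set

noncomputable section

abbrev E2 := EuclideanSpace ℝ (Fin 2)

/-- The `i`-th standard basis vector of ℝ². -/
def basis2 (i : Fin 2) : E2 := EuclideanSpace.single i (1 : ℝ)

/-- Laplacian of a complex-valued function on ℝ². -/
def lapC (u : E2 → ℂ) (x : E2) : ℂ :=
  ∑ i, fderiv ℝ (fun y => fderiv ℝ u y (basis2 i)) x (basis2 i)

/-- The conjugated Schrödinger operator `P u = e^{φ/h}(−h²Δ + W)(e^{−φ/h} u)`. -/
def opP (h : ℝ) (φ : E2 → ℝ) (W : E2 → ℝ) (u : E2 → ℂ) (x : E2) : ℂ :=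
  (Real.exp (φ x / h) : ℂ) *
    (-(h ^ 2 : ℂ) * lapC (fun y => (Real.exp (-φ y / h) : ℂ) * u y) x +
      (W x : ℂ) * ((Real.exp (-φ x / h) : ℂ) * u x))

/-- The conjugated free Laplacian `A u = e^{φ/h}(−h²Δ)(e^{−φ/h} u)`. -/
def opA (h : ℝ) (φ : E2 → ℝ) (u : E2 → ℂ) (x : E2) : ℂ :=
  (Real.exp (φ x / h) : ℂ) *
    (-(h ^ 2 : ℂ) * lapC (fun y => (Real.exp (-φ y / h) : ℂ) * u y) x)

/-- Its formal adjoint `A* u = e^{−φ/h}(−h²Δ)(e^{φ/h} u)`. -/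
def opAstar (h : ℝ) (φ : E2 → ℝ) (u : E2 → ℂ) (x : E2) : ℂ :=
  (Real.exp (-φ x / h) : ℂ) *
    (-(h ^ 2 : ℂ) * lapC (fun y => (Real.exp (φ y / h) : ℂ) * u y) x)

/-!
The weights `e^{±φ/h}` turn `-h²Δ` into `A u = -h²Δu + 2h ∇φ·∇u + hΔφ u - |∇φ|² u` and, with `φ`
replaced by `-φ`, into `A*`; integrating by parts twice shows that `A*` is the adjoint of `A`. Hence
`Re ⟨(A*A - AA*)u, u⟩ = ‖Au‖² - ‖A*u‖²`, and expanding squares gives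
`‖(A + W)u‖² = ‖(A* + W)u‖² + ‖Au‖² - ‖A*u‖² + 2 Re ⟨(A - A*)u, Wu⟩`. The first term is nonnegative,
and since `Re ((A - A*)u · ū) = 2h div(|u|²∇φ)`, one more integration by parts moves the divergence
onto `W`, so that the last term is `-4h ∫ (∇W·∇φ)|u|²`.
-/

open scoped ComplexConjugate

section Calculus

variable {E : Type*} [NormedAddCommGroup E] [NormedSpace ℝ E]

lemma contDiff_fderiv_apply_const {F : Type*} [NormedAddCommGroup F] [NormedSpace ℝ F]
    {m n : WithTop ℕ∞} {f : E → F} (hf : ContDiff ℝ n f) (hmn : m + 1 ≤ n) (v : E) :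
    ContDiff ℝ m fun y ↦ fderiv ℝ f y v :=
  (hf.fderiv_right hmn).clm_apply contDiff_const

lemma contDiff_ofReal_exp_div {n : WithTop ℕ∞} {φ : E → ℝ} (hφ : ContDiff ℝ n φ) (h : ℝ) :
    ContDiff ℝ n fun y ↦ (Real.exp (φ y / h) : ℂ) :=
  Complex.ofRealCLM.contDiff.comp (hφ.div_const h).exp

lemma fderiv_exp_mul_apply {ψ : E → ℝ} {w : E → ℂ} {x : E} (c : ℝ)
    (hψ : DifferentiableAt ℝ ψ x) (hw : DifferentiableAt ℝ w x) (v : E) :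
    fderiv ℝ (fun y ↦ (Real.exp (c * ψ y) : ℂ) * w y) x v =
      (Real.exp (c * ψ x) : ℂ) * (c * fderiv ℝ ψ x v * w x + fderiv ℝ w x v) := by
  have hexp : HasFDerivAt (fun y ↦ (Real.exp (c * ψ y) : ℂ)) _ x :=
    Complex.ofRealCLM.hasFDerivAt.comp x (hψ.hasFDerivAt.const_mul c).exp
  rw [(hexp.fun_mul hw.hasFDerivAt).fderiv]
  simp only [Complex.ofReal_exp, Complex.ofReal_mul, ContinuousLinearMap.comp_smulₛₗ,
    Real.ringHom_apply, add_apply, smul_apply, smul_eq_mul, ContinuousLinearMap.comp_apply,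
    Complex.ofRealCLM_apply, Complex.real_smul]
  ring

lemma fderiv_ofReal_mul_apply {ψ : E → ℝ} {w : E → ℂ} {x : E}
    (hψ : DifferentiableAt ℝ ψ x) (hw : DifferentiableAt ℝ w x) (v : E) :
    fderiv ℝ (fun y ↦ (ψ y : ℂ) * w y) x v =
      ψ x * fderiv ℝ w x v + fderiv ℝ ψ x v * w x := by
  have hcast : HasFDerivAt (fun y ↦ (ψ y : ℂ)) _ x :=
    Complex.ofRealCLM.hasFDerivAt.comp x hψ.hasFDerivAt
  rw [(hcast.fun_mul hw.hasFDerivAt).fderiv]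
  simp only [add_apply, smul_apply, smul_eq_mul, ContinuousLinearMap.comp_apply,
    Complex.ofRealCLM_apply]
  ring

lemma fderiv_fderiv_exp_mul_apply {ψ : E → ℝ} {w : E → ℂ} (c : ℝ)
    (hψ : ContDiff ℝ 2 ψ) (hw : ContDiff ℝ 2 w) (x v : E) :
    fderiv ℝ (fun y ↦ fderiv ℝ (fun z ↦ (Real.exp (c * ψ z) : ℂ) * w z) y v) x v =
      (Real.exp (c * ψ x) : ℂ) *
        (fderiv ℝ (fun y ↦ fderiv ℝ w y v) x v +
          2 * c * (fderiv ℝ ψ x v * fderiv ℝ w x v) +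
          (c * fderiv ℝ (fun y ↦ fderiv ℝ ψ y v) x v +
            c ^ 2 * (fderiv ℝ ψ x v : ℂ) ^ 2) * w x) := by
  have dψ : Differentiable ℝ ψ := hψ.differentiable two_ne_zero
  have dw : Differentiable ℝ w := hw.differentiable two_ne_zero
  have dψ' : Differentiable ℝ fun y ↦ fderiv ℝ ψ y v :=
    (contDiff_fderiv_apply_const hψ one_add_one_eq_two.le v).differentiable one_ne_zero
  have dw' : Differentiable ℝ fun y ↦ fderiv ℝ w y v :=
    (contDiff_fderiv_apply_const hw one_add_one_eq_two.le v).differentiable one_ne_zero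
  have dψw : Differentiable ℝ fun y ↦ (fderiv ℝ ψ y v : ℂ) * w y :=
    (Complex.ofRealCLM.differentiable.comp dψ').mul dw
  simp only [fderiv_exp_mul_apply c (dψ _) (dw _), mul_assoc (c : ℂ)]
  rw [fderiv_exp_mul_apply c (dψ x) (((dψw x).const_mul (c : ℂ)).fun_add (dw' x)),
    fderiv_fun_add ((dψw x).const_mul (c : ℂ)) (dw' x), fderiv_const_mul (dψw x)]
  simp only [add_apply, FunLike.coe_smul, Pi.smul_apply, smul_eq_mul,
    fderiv_ofReal_mul_apply (dψ' x) (dw x)]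
  ring

lemma fderiv_norm_sq_mul_apply {F : Type*} [NormedAddCommGroup F] [InnerProductSpace ℝ F]
    {u : E → F} {ψ : E → ℝ} {x : E}
    (hu : DifferentiableAt ℝ u x) (hψ : DifferentiableAt ℝ ψ x) (v : E) :
    fderiv ℝ (fun y ↦ ‖u y‖ ^ 2 * ψ y) x v =
      2 * inner ℝ (u x) (fderiv ℝ u x v) * ψ x + ‖u x‖ ^ 2 * fderiv ℝ ψ x v := by
  rw [(hu.hasFDerivAt.norm_sq.fun_mul hψ.hasFDerivAt).fderiv]
  simp only [add_apply, smul_apply, smul_eq_mul, ContinuousLinearMap.comp_apply,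
    coe_innerSL_apply, nsmul_eq_mul, Nat.cast_ofNat]
  ring

end Calculus

section Integral

lemma re_integral_mul_conj_self {α : Type*} [MeasurableSpace α] (μ : Measure α) (f : α → ℂ) :
    (∫ x, f x * conj (f x) ∂μ).re = ∫ x, ‖f x‖ ^ 2 ∂μ := by
  simp only [Complex.mul_conj', ← Complex.ofReal_pow]
  rw [integral_complex_ofReal, Complex.ofReal_re]

section CompactSupport

variable {X F : Type*} [TopologicalSpace X] [MeasurableSpace X] [OpensMeasurableSpace X]
  [NormedAddCommGroup F] {μ : Measure X} [IsFiniteMeasureOnCompacts μ] {u : X → F}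

lemma integrable_norm_sq_of_hasCompactSupport (hu : Continuous u) (hu' : HasCompactSupport u) :
    Integrable (fun x ↦ ‖u x‖ ^ 2) μ :=
  (hu.memLp_of_hasCompactSupport hu').integrable_norm_pow two_ne_zero

lemma integral_mul_norm_sq_le {f : X → ℝ} {M : ℝ} (hf : Continuous f) (hM : ∀ x, f x ≤ M)
    (hu : Continuous u) (hu' : HasCompactSupport u) :
    ∫ x, f x * ‖u x‖ ^ 2 ∂μ ≤ M * ∫ x, ‖u x‖ ^ 2 ∂μ := by
  have hsq : HasCompactSupport fun x ↦ ‖u x‖ ^ 2 := hu'.comp_left (g := fun z ↦ ‖z‖ ^ 2) (by simp)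
  have hint : Integrable (fun x ↦ f x * ‖u x‖ ^ 2) μ :=
    (hf.mul (hu.norm.pow 2)).integrable_of_hasCompactSupport hsq.mul_left
  rw [← integral_const_mul]
  exact integral_mono hint ((integrable_norm_sq_of_hasCompactSupport hu hu').const_mul M)
    fun x ↦ mul_le_mul_of_nonneg_right (hM x) (sq_nonneg _)

end CompactSupport

variable {ι E 𝕜 : Type*} [Fintype ι] [NormedAddCommGroup E] [NormedSpace ℝ E]
  [FiniteDimensional ℝ E] [MeasurableSpace E] [BorelSpace E] {μ : Measure E} [μ.IsAddHaarMeasure]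
  [NormedField 𝕜] [NormedAlgebra ℝ 𝕜]

lemma integral_sum_mul_fderiv_apply {f g : ι → E → 𝕜} (hf : ∀ i, ContDiff ℝ 1 (f i))
    (hg : ∀ i, ContDiff ℝ 1 (g i)) (hg' : ∀ i, HasCompactSupport (g i)) (v : ι → E) :
    ∫ x, ∑ i, f i x * fderiv ℝ (g i) x (v i) ∂μ =
      -∫ x, ∑ i, fderiv ℝ (f i) x (v i) * g i x ∂μ := by
  have hDf : ∀ i, Continuous fun x ↦ fderiv ℝ (f i) x (v i) := fun i ↦
    ((hf i).continuous_fderiv one_ne_zero).clm_apply continuous_const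
  have hDg : ∀ i, Continuous fun x ↦ fderiv ℝ (g i) x (v i) := fun i ↦
    ((hg i).continuous_fderiv one_ne_zero).clm_apply continuous_const
  have hfg : ∀ i, Integrable (fun x ↦ f i x * g i x) μ := fun i ↦
    ((hf i).continuous.mul (hg i).continuous).integrable_of_hasCompactSupport (hg' i).mul_left
  have hfDg : ∀ i, Integrable (fun x ↦ f i x * fderiv ℝ (g i) x (v i)) μ := fun i ↦
    ((hf i).continuous.mul (hDg i)).integrable_of_hasCompactSupport
      ((hg' i).fderiv_apply ℝ (v i)).mul_left
  have hDfg : ∀ i, Integrable (fun x ↦ fderiv ℝ (f i) x (v i) * g i x) μ := fun i ↦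
    ((hDf i).mul (hg i).continuous).integrable_of_hasCompactSupport (hg' i).mul_left
  rw [integral_finsetSum _ fun i _ ↦ hfDg i, integral_finsetSum _ fun i _ ↦ hDfg i,
    ← Finset.sum_neg_distrib]
  exact Finset.sum_congr rfl fun i _ ↦
    integral_mul_fderiv_eq_neg_fderiv_mul_of_integrable (hDfg i) (hfDg i) (hfg i)
      (fun x _ ↦ (hf i).differentiable one_ne_zero x)
      fun x _ ↦ (hg i).differentiable one_ne_zero x

end Integral

/-- The constant-coefficient operator `∑ i, ∂_{v i}²` attached to a finite family `v` of directions.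
For an orthonormal basis `v` it is the Laplacian. -/
def laplacianAlong {ι E F : Type*} [Fintype ι] [NormedAddCommGroup E] [NormedSpace ℝ E]
    [NormedAddCommGroup F] [NormedSpace ℝ F] (v : ι → E) (u : E → F) (x : E) : F :=
  ∑ i, fderiv ℝ (fun y ↦ fderiv ℝ u y (v i)) x (v i)

section Laplacian

variable {ι E F : Type*} [Fintype ι] [NormedAddCommGroup E] [NormedSpace ℝ E]
  [NormedAddCommGroup F] [NormedSpace ℝ F] {v : ι → E}

lemma contDiff_laplacianAlong {m n : WithTop ℕ∞} {u : E → F} (hu : ContDiff ℝ n u)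
    (hmn : m + 2 ≤ n) : ContDiff ℝ m (laplacianAlong v u) := by
  have hmn' : m + 1 + 1 ≤ n := by rwa [add_assoc, one_add_one_eq_two]
  exact ContDiff.sum fun i _ ↦
    contDiff_fderiv_apply_const (contDiff_fderiv_apply_const hu hmn' (v i)) le_rfl (v i)

lemma hasCompactSupport_laplacianAlong {u : E → F} (hu : HasCompactSupport u) :
    HasCompactSupport (laplacianAlong v u) := by
  have hsum : laplacianAlong v u = ∑ i, fun x ↦ fderiv ℝ (fun y ↦ fderiv ℝ u y (v i)) x (v i) := by
    ext x
    rw [laplacianAlong, Finset.sum_apply]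
  rw [hsum]
  exact HasCompactSupport.finset_sum fun i _ ↦ (hu.fderiv_apply ℝ (v i)).fderiv_apply ℝ (v i)

lemma laplacianAlong_neg (u : E → F) (x : E) : laplacianAlong v (-u) x = -laplacianAlong v u x := by
  simp [laplacianAlong, fderiv_neg]

lemma laplacianAlong_conj (u : E → ℂ) (x : E) :
    laplacianAlong v (fun y ↦ conj (u y)) x = conj (laplacianAlong v u x) := by
  simp only [laplacianAlong, starRingEnd_apply, fderiv_star, star_sum,
    ContinuousLinearMap.comp_apply, ContinuousLinearEquiv.coe_coe, starL'_apply]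

lemma laplacianAlong_exp_mul (c : ℝ) {ψ : E → ℝ} {u : E → ℂ} (hψ : ContDiff ℝ 2 ψ)
    (hu : ContDiff ℝ 2 u) (x : E) :
    laplacianAlong v (fun y ↦ (Real.exp (c * ψ y) : ℂ) * u y) x =
      (Real.exp (c * ψ x) : ℂ) *
        (laplacianAlong v u x + 2 * c * ∑ i, fderiv ℝ ψ x (v i) * fderiv ℝ u x (v i) +
          (c * laplacianAlong v ψ x + c ^ 2 * ∑ i, (fderiv ℝ ψ x (v i) : ℂ) ^ 2) * u x) := by
  simp only [laplacianAlong, fderiv_fderiv_exp_mul_apply c hψ hu, Complex.ofReal_sum,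
    Finset.mul_sum, Finset.sum_mul, ← Finset.sum_add_distrib]

lemma integral_laplacianAlong_mul [FiniteDimensional ℝ E] [MeasurableSpace E] [BorelSpace E]
    {μ : Measure E} [μ.IsAddHaarMeasure] {𝕜 : Type*} [NormedField 𝕜] [NormedAlgebra ℝ 𝕜]
    {f g : E → 𝕜} (hf : ContDiff ℝ 2 f) (hg : ContDiff ℝ 2 g) (hg' : HasCompactSupport g) :
    ∫ x, laplacianAlong v f x * g x ∂μ = ∫ x, f x * laplacianAlong v g x ∂μ := by
  have hDf : ∀ i, ContDiff ℝ 1 fun y ↦ fderiv ℝ f y (v i) := fun i ↦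
    contDiff_fderiv_apply_const hf one_add_one_eq_two.le (v i)
  have hDg : ∀ i, ContDiff ℝ 1 fun y ↦ fderiv ℝ g y (v i) := fun i ↦
    contDiff_fderiv_apply_const hg one_add_one_eq_two.le (v i)
  have hf1 : ContDiff ℝ 1 f := hf.of_le one_le_two
  have hg1 : ContDiff ℝ 1 g := hg.of_le one_le_two
  simp only [laplacianAlong, Finset.sum_mul, Finset.mul_sum]
  rw [integral_sum_mul_fderiv_apply (fun _ ↦ hf1) hDg (fun i ↦ hg'.fderiv_apply ℝ (v i)) v,
    integral_sum_mul_fderiv_apply hDf (fun _ ↦ hg1) (fun _ ↦ hg') v, neg_neg]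

end Laplacian

/-- The conjugated semiclassical Laplacian `e^{φ/h} ∘ (-h²Δ) ∘ e^{-φ/h}`, where `Δ` is
`laplacianAlong v`. Its formal adjoint is `conjLaplacian v h (-φ)`. -/
def conjLaplacian {ι E : Type*} [Fintype ι] [NormedAddCommGroup E] [NormedSpace ℝ E]
    (v : ι → E) (h : ℝ) (φ : E → ℝ) (u : E → ℂ) (x : E) : ℂ :=
  (Real.exp (φ x / h) : ℂ) *
    (-(h ^ 2 : ℂ) * laplacianAlong v (fun y ↦ (Real.exp (-φ y / h) : ℂ) * u y) x)

section ConjLaplacian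

variable {ι E : Type*} [Fintype ι] [NormedAddCommGroup E] [NormedSpace ℝ E]
  {v : ι → E} {h : ℝ} {φ : E → ℝ} {u : E → ℂ}

lemma contDiff_conjLaplacian {m n : WithTop ℕ∞} (hφ : ContDiff ℝ n φ) (hu : ContDiff ℝ n u)
    (hmn : m + 2 ≤ n) : ContDiff ℝ m (conjLaplacian v h φ u) :=
  (contDiff_ofReal_exp_div (hφ.of_le (le_self_add.trans hmn)) h).mul
    (contDiff_const.mul (contDiff_laplacianAlong ((contDiff_ofReal_exp_div hφ.neg h).mul hu) hmn))

lemma hasCompactSupport_conjLaplacian (hu : HasCompactSupport u) :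
    HasCompactSupport (conjLaplacian v h φ u) :=
  (hasCompactSupport_laplacianAlong hu.mul_left).mul_left.mul_left

lemma conjLaplacian_conj (u : E → ℂ) (x : E) :
    conjLaplacian v h φ (fun y ↦ conj (u y)) x = conj (conjLaplacian v h φ u x) := by
  simp only [conjLaplacian, map_mul, map_neg, map_pow, Complex.conj_ofReal,
    ← laplacianAlong_conj]

lemma conjLaplacian_apply (hh : h ≠ 0) (hφ : ContDiff ℝ 2 φ) (hu : ContDiff ℝ 2 u) (x : E) :
    conjLaplacian v h φ u x =
      -h ^ 2 * laplacianAlong v u x + 2 * h * ∑ i, fderiv ℝ φ x (v i) * fderiv ℝ u x (v i) +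
        (h * laplacianAlong v φ x - ∑ i, (fderiv ℝ φ x (v i) : ℂ) ^ 2) * u x := by
  have hexp : (Real.exp (φ x / h) : ℂ) * Real.exp (-h⁻¹ * φ x) = 1 := by
    rw [← Complex.ofReal_mul, ← Real.exp_add]
    simp [div_eq_inv_mul]
  have hdiv : ∀ y, -φ y / h = -h⁻¹ * φ y := fun y ↦ by ring
  have hh' : (h : ℂ) ≠ 0 := Complex.ofReal_ne_zero.mpr hh
  simp only [conjLaplacian, hdiv, laplacianAlong_exp_mul _ hφ hu]
  rw [mul_left_comm, ← mul_assoc (Real.exp (φ x / h) : ℂ), hexp]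
  push_cast
  field_simp
  ring

lemma conjLaplacian_sub_conjLaplacian_neg (hh : h ≠ 0) (hφ : ContDiff ℝ 2 φ)
    (hu : ContDiff ℝ 2 u) (x : E) :
    conjLaplacian v h φ u x - conjLaplacian v h (-φ) u x =
      (4 * h) • ∑ i, fderiv ℝ φ x (v i) • fderiv ℝ u x (v i) +
        (2 * h * laplacianAlong v φ x) • u x := by
  rw [conjLaplacian_apply hh hφ hu, conjLaplacian_apply (φ := -φ) hh hφ.neg hu]
  simp only [laplacianAlong_neg, fderiv_neg, neg_apply, Complex.ofReal_neg,
    neg_mul, neg_sq, Finset.sum_neg_distrib, Complex.real_smul]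
  push_cast
  ring

lemma inner_conjLaplacian_sub_conjLaplacian_neg (hh : h ≠ 0) (hφ : ContDiff ℝ 2 φ)
    (hu : ContDiff ℝ 2 u) (x : E) :
    inner ℝ (u x) (conjLaplacian v h φ u x - conjLaplacian v h (-φ) u x) =
      2 * h * ∑ i, fderiv ℝ (fun y ↦ ‖u y‖ ^ 2 * fderiv ℝ φ y (v i)) x (v i) := by
  have hDφ : ∀ i, DifferentiableAt ℝ (fun y ↦ fderiv ℝ φ y (v i)) x := fun i ↦
    (contDiff_fderiv_apply_const hφ one_add_one_eq_two.le (v i)).differentiable one_ne_zero x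
  have hu' : DifferentiableAt ℝ u x := hu.differentiable two_ne_zero x
  simp only [conjLaplacian_sub_conjLaplacian_neg hh hφ hu, inner_add_right,
    real_inner_smul_right, inner_sum, real_inner_self_eq_norm_sq, laplacianAlong,
    fderiv_norm_sq_mul_apply hu' (hDφ _),
    Finset.mul_sum, Finset.sum_mul, ← Finset.sum_add_distrib]
  exact Finset.sum_congr rfl fun i _ ↦ by ring

section Integral

variable [FiniteDimensional ℝ E] [MeasurableSpace E] [BorelSpace E] {μ : Measure E}
  [μ.IsAddHaarMeasure]

lemma integral_conjLaplacian_mul {f g : E → ℂ} (hφ : ContDiff ℝ 2 φ) (hf : ContDiff ℝ 2 f)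
    (hg : ContDiff ℝ 2 g) (hg' : HasCompactSupport g) :
    ∫ x, conjLaplacian v h φ f x * g x ∂μ = ∫ x, f x * conjLaplacian v h (-φ) g x ∂μ := by
  have hsymm := integral_laplacianAlong_mul (v := v) (μ := μ)
    ((contDiff_ofReal_exp_div hφ.neg h).mul hf) ((contDiff_ofReal_exp_div hφ h).mul hg) hg'.mul_left
  calc ∫ x, conjLaplacian v h φ f x * g x ∂μ
      = ∫ x, -(h ^ 2 : ℂ) * (laplacianAlong v (fun y ↦ (Real.exp (-φ y / h) : ℂ) * f y) x *
          ((Real.exp (φ x / h) : ℂ) * g x)) ∂μ := by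
        congr with x
        rw [conjLaplacian]
        ring
    _ = ∫ x, -(h ^ 2 : ℂ) * ((Real.exp (-φ x / h) : ℂ) * f x *
          laplacianAlong v (fun y ↦ (Real.exp (φ y / h) : ℂ) * g y) x) ∂μ := by
        rw [integral_const_mul, integral_const_mul]
        exact congrArg _ hsymm
    _ = ∫ x, f x * conjLaplacian v h (-φ) g x ∂μ := by
        congr with x
        simp only [conjLaplacian, Pi.neg_apply, neg_neg]
        ring

lemma integral_conjLaplacian_mul_conj {f g : E → ℂ} (hφ : ContDiff ℝ 2 φ) (hf : ContDiff ℝ 2 f)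
    (hg : ContDiff ℝ 2 g) (hg' : HasCompactSupport g) :
    ∫ x, conjLaplacian v h φ f x * conj (g x) ∂μ =
      ∫ x, f x * conj (conjLaplacian v h (-φ) g x) ∂μ := by
  rw [integral_conjLaplacian_mul (g := fun y ↦ conj (g y)) hφ hf
    (Complex.conjCLE.contDiff.comp hg) (hg'.comp_left (map_zero _))]
  simp only [conjLaplacian_conj]

lemma re_integral_commutator_conjLaplacian (hφ : ContDiff ℝ 4 φ) (hu : ContDiff ℝ 4 u)
    (hu' : HasCompactSupport u) :
    (∫ x, (conjLaplacian v h (-φ) (conjLaplacian v h φ u) x -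
        conjLaplacian v h φ (conjLaplacian v h (-φ) u) x) * conj (u x) ∂μ).re =
      ∫ x, ‖conjLaplacian v h φ u x‖ ^ 2 ∂μ - ∫ x, ‖conjLaplacian v h (-φ) u x‖ ^ 2 ∂μ := by
  have hle : (2 : WithTop ℕ∞) + 2 ≤ 4 := two_add_two_eq_four.le
  have hle' : (2 : WithTop ℕ∞) ≤ 4 := le_self_add.trans hle
  have hφ2 : ContDiff ℝ 2 φ := hφ.of_le hle'
  have hu2 : ContDiff ℝ 2 u := hu.of_le hle'
  have hA : ContDiff ℝ 2 (conjLaplacian v h φ u) := contDiff_conjLaplacian hφ hu hle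
  have hB : ContDiff ℝ 2 (conjLaplacian v h (-φ) u) := contDiff_conjLaplacian hφ.neg hu hle
  have hint : ∀ {f : E → ℂ}, ContDiff ℝ 0 f → Integrable (fun x ↦ f x * conj (u x)) μ := fun hf ↦
    (hf.continuous.mul (Complex.continuous_conj.comp hu.continuous)).integrable_of_hasCompactSupport
      (hu'.comp_left (map_zero _)).mul_left
  have hBA := integral_conjLaplacian_mul_conj (v := v) (h := h) (μ := μ) (φ := -φ)
    hφ2.neg hA hu2 hu'
  have hAB := integral_conjLaplacian_mul_conj (v := v) (h := h) (μ := μ) hφ2 hB hu2 hu'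
  rw [neg_neg] at hBA
  simp only [sub_mul]
  rw [integral_sub (hint (contDiff_conjLaplacian (φ := -φ) hφ2.neg hA (zero_add _).le))
      (hint (contDiff_conjLaplacian hφ2 hB (zero_add _).le)),
    hBA, hAB, Complex.sub_re, re_integral_mul_conj_self, re_integral_mul_conj_self]

lemma integral_mul_inner_conjLaplacian_sub {W : E → ℝ} (hh : h ≠ 0) (hφ : ContDiff ℝ 2 φ)
    (hW : ContDiff ℝ 1 W) (hu : ContDiff ℝ 2 u) (hu' : HasCompactSupport u) :
    ∫ x, W x * inner ℝ (u x) (conjLaplacian v h φ u x - conjLaplacian v h (-φ) u x) ∂μ =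
      -(2 * h * ∫ x, (∑ i, fderiv ℝ W x (v i) * fderiv ℝ φ x (v i)) * ‖u x‖ ^ 2 ∂μ) := by
  have hflux : ∀ i, ContDiff ℝ 1 fun y ↦ ‖u y‖ ^ 2 * fderiv ℝ φ y (v i) := fun i ↦
    ((hu.of_le one_le_two).norm_sq ℝ).mul
      (contDiff_fderiv_apply_const hφ one_add_one_eq_two.le (v i))
  have hflux' : ∀ i, HasCompactSupport fun y ↦ ‖u y‖ ^ 2 * fderiv ℝ φ y (v i) := fun i ↦
    (hu'.comp_left (g := fun z ↦ ‖z‖ ^ 2) (by simp)).mul_right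
  have hparts := integral_sum_mul_fderiv_apply (μ := μ) (fun _ ↦ hW) hflux hflux' v
  simp only [inner_conjLaplacian_sub_conjLaplacian_neg hh hφ hu, mul_left_comm (W _),
    Finset.mul_sum Finset.univ _ (W _)]
  rw [integral_const_mul, hparts, mul_neg]
  simp only [Finset.sum_mul, mul_assoc, mul_comm (‖u _‖ ^ 2)]

end Integral

end ConjLaplacian

/-- The conjugated Schrödinger operator `e^{φ/h} ∘ (-h²Δ + W) ∘ e^{-φ/h}`, where `Δ` is
`laplacianAlong v`. -/
def conjSchrodinger {ι E : Type*} [Fintype ι] [NormedAddCommGroup E] [NormedSpace ℝ E]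
    (v : ι → E) (h : ℝ) (φ W : E → ℝ) (u : E → ℂ) (x : E) : ℂ :=
  (Real.exp (φ x / h) : ℂ) *
    (-(h ^ 2 : ℂ) * laplacianAlong v (fun y ↦ (Real.exp (-φ y / h) : ℂ) * u y) x +
      (W x : ℂ) * ((Real.exp (-φ x / h) : ℂ) * u x))

section ConjSchrodinger

variable {ι E : Type*} [Fintype ι] [NormedAddCommGroup E] [NormedSpace ℝ E]
  {v : ι → E} {h : ℝ} {φ W : E → ℝ} {u : E → ℂ}

lemma conjSchrodinger_apply (u : E → ℂ) (x : E) :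
    conjSchrodinger v h φ W u x = conjLaplacian v h φ u x + W x • u x := by
  have hexp : (Real.exp (φ x / h) : ℂ) * Real.exp (-φ x / h) = 1 := by
    rw [← Complex.ofReal_mul, ← Real.exp_add]
    simp [neg_div]
  rw [conjSchrodinger, conjLaplacian, Complex.real_smul]
  linear_combination (W x : ℂ) * u x * hexp

lemma continuous_conjSchrodinger (hφ : ContDiff ℝ 2 φ) (hW : Continuous W) (hu : ContDiff ℝ 2 u) :
    Continuous (conjSchrodinger v h φ W u) := by
  rw [funext (conjSchrodinger_apply u)]
  exact (contDiff_conjLaplacian hφ hu (zero_add _).le).continuous.add (hW.smul hu.continuous)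

lemma hasCompactSupport_conjSchrodinger (hu : HasCompactSupport u) :
    HasCompactSupport (conjSchrodinger v h φ W u) := by
  rw [funext (conjSchrodinger_apply u)]
  exact (hasCompactSupport_conjLaplacian hu).add (hu.smul_left (f := W))

lemma norm_sq_conjSchrodinger (u : E → ℂ) (x : E) :
    ‖conjSchrodinger v h φ W u x‖ ^ 2 =
      ‖conjSchrodinger v h (-φ) W u x‖ ^ 2 +
        (‖conjLaplacian v h φ u x‖ ^ 2 - ‖conjLaplacian v h (-φ) u x‖ ^ 2) +
        2 * (W x * inner ℝ (u x) (conjLaplacian v h φ u x - conjLaplacian v h (-φ) u x)) := by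
  simp only [conjSchrodinger_apply, norm_add_sq_real, real_inner_smul_right, inner_sub_right,
    real_inner_comm (u x)]
  ring

lemma integral_norm_sq_conjSchrodinger [FiniteDimensional ℝ E] [MeasurableSpace E] [BorelSpace E]
    {μ : Measure E} [μ.IsAddHaarMeasure] (hh : h ≠ 0) (hφ : ContDiff ℝ 2 φ) (hW : ContDiff ℝ 1 W)
    (hu : ContDiff ℝ 2 u) (hu' : HasCompactSupport u) :
    ∫ x, ‖conjSchrodinger v h φ W u x‖ ^ 2 ∂μ =
      ∫ x, ‖conjSchrodinger v h (-φ) W u x‖ ^ 2 ∂μ +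
        (∫ x, ‖conjLaplacian v h φ u x‖ ^ 2 ∂μ - ∫ x, ‖conjLaplacian v h (-φ) u x‖ ^ 2 ∂μ) -
        4 * h * ∫ x, (∑ i, fderiv ℝ W x (v i) * fderiv ℝ φ x (v i)) * ‖u x‖ ^ 2 ∂μ := by
  have hA : Continuous (conjLaplacian v h φ u) :=
    (contDiff_conjLaplacian hφ hu (zero_add _).le).continuous
  have hB : Continuous (conjLaplacian v h (-φ) u) :=
    (contDiff_conjLaplacian hφ.neg hu (zero_add _).le).continuous
  have iA := integrable_norm_sq_of_hasCompactSupport (μ := μ) hA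
    (hasCompactSupport_conjLaplacian hu')
  have iB := integrable_norm_sq_of_hasCompactSupport (μ := μ) hB
    (hasCompactSupport_conjLaplacian hu')
  have iQ := integrable_norm_sq_of_hasCompactSupport (μ := μ)
    (continuous_conjSchrodinger (φ := -φ) hφ.neg hW.continuous hu)
    (hasCompactSupport_conjSchrodinger (v := v) (h := h) (φ := -φ) (W := W) hu')
  have iAB : Integrable
      (fun x ↦ ‖conjLaplacian v h φ u x‖ ^ 2 - ‖conjLaplacian v h (-φ) u x‖ ^ 2) μ := iA.sub iB
  have icross : Integrable (fun x ↦ W x *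
      inner ℝ (u x) (conjLaplacian v h φ u x - conjLaplacian v h (-φ) u x)) μ :=
    (hW.continuous.mul (hu.continuous.inner (hA.sub hB))).integrable_of_hasCompactSupport
      (HasCompactSupport.mul_left (hu'.mono fun x hx hux ↦ hx (by simp [hux])))
  simp only [norm_sq_conjSchrodinger (φ := φ)]
  rw [integral_add (iQ.fun_add iAB) (icross.const_mul 2), integral_add iQ iAB,
    integral_sub iA iB, integral_const_mul,
    integral_mul_inner_conjLaplacian_sub hh hφ hW hu hu']
  ring

end ConjSchrodinger

theorem stmt2_general {ι E : Type*} [Fintype ι] [NormedAddCommGroup E] [NormedSpace ℝ E]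
    [FiniteDimensional ℝ E] [MeasurableSpace E] [BorelSpace E] (μ : Measure E)
    [μ.IsAddHaarMeasure] (v : ι → E) {h : ℝ} (hh : 0 < h) {φ W : E → ℝ} (hφ : ContDiff ℝ 4 φ)
    (hW : ContDiff ℝ 1 W) {M : ℝ} (hM : ∀ x, ∑ i, fderiv ℝ W x (v i) * fderiv ℝ φ x (v i) ≤ M)
    {u : E → ℂ} (hu : ContDiff ℝ 4 u) (hu' : HasCompactSupport u) :
    (1 / h) * (∫ x, (conjLaplacian v h (-φ) (conjLaplacian v h φ u) x -
        conjLaplacian v h φ (conjLaplacian v h (-φ) u) x) * conj (u x) ∂μ).re -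
      4 * M * ∫ x, ‖u x‖ ^ 2 ∂μ ≤ (1 / h) * ∫ x, ‖conjSchrodinger v h φ W u x‖ ^ 2 ∂μ := by
  have hle : (2 : WithTop ℕ∞) ≤ 4 := by norm_num
  have hφ1 : ContDiff ℝ 1 φ := hφ.of_le (one_le_two.trans hle)
  have hcont : Continuous fun x ↦ ∑ i, fderiv ℝ W x (v i) * fderiv ℝ φ x (v i) :=
    continuous_finsetSum _ fun i _ ↦
      (contDiff_fderiv_apply_const hW (zero_add _).le (v i)).continuous.mul
        (contDiff_fderiv_apply_const hφ1 (zero_add _).le (v i)).continuous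
  have hgrad := integral_mul_norm_sq_le (μ := μ) hcont hM hu.continuous hu'
  have hnonneg : 0 ≤ 1 / h * ∫ x, ‖conjSchrodinger v h (-φ) W u x‖ ^ 2 ∂μ :=
    mul_nonneg (one_div_nonneg.mpr hh.le) (integral_nonneg fun x ↦ sq_nonneg _)
  have hcancel : ∀ t : ℝ, 1 / h * (4 * h * t) = 4 * t := fun t ↦ by field_simp
  rw [re_integral_commutator_conjLaplacian hφ hu hu',
    integral_norm_sq_conjSchrodinger hh.ne' (hφ.of_le hle) hW (hu.of_le hle) hu',
    mul_sub _ (_ + _), mul_add, hcancel]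
  linarith

lemma opAstar_eq_conjLaplacian_neg (h : ℝ) (φ : E2 → ℝ) :
    opAstar h φ = conjLaplacian basis2 h (-φ) := by
  funext u x
  simp only [opAstar, conjLaplacian, Pi.neg_apply, neg_neg]
  rfl

theorem stmt2 (h : ℝ) (hh : 0 < h)
    (φ : E2 → ℝ) (hφ : ContDiff ℝ (⊤ : ℕ∞) φ)
    (W : E2 → ℝ) (hW : ContDiff ℝ 1 W) (hWbdd : ∃ B : ℝ, ∀ x, |W x| ≤ B)
    (M : ℝ)
    (hM : ∀ x : E2, |∑ i, fderiv ℝ W x (basis2 i) * fderiv ℝ φ x (basis2 i)| ≤ M)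
    (u : E2 → ℂ) (hu : ContDiff ℝ (⊤ : ℕ∞) u) (hucpt : HasCompactSupport u) :
    (1 / h) * ∫ x : E2, ‖opP h φ W u x‖ ^ 2 ≥
      (1 / h) * (∫ x : E2,
          (opAstar h φ (opA h φ u) x - opA h φ (opAstar h φ u) x) *
            (starRingEnd ℂ) (u x)).re -
        4 * M * ∫ x : E2, ‖u x‖ ^ 2 := by
  rw [opAstar_eq_conjLaplacian_neg]
  exact stmt2_general volume basis2 hh (contDiff_infty.mp hφ 4) hW
    (fun x ↦ (le_abs_self _).trans (hM x)) (contDiff_infty.mp hu 4) hucpt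
end
end

section
/- Let c > 0 and ω ∈ ℝ. For r > 0 and ρ ∈ ℝ define a(r,ρ) := ρ² − c²e^{2r} + ω²/r² and b(r,ρ) := 2ρ c e^{r} (the real and imaginary parts of the conjugated symbol p_φ(r,ρ) = (ρ + i c e^{r})² + ω²/r² with weight φ(r) = c e^{r}). Then for all r > 0 and ρ ∈ ℝ, (∂_ρ a)(r,ρ)·(∂_r b)(r,ρ) − (∂_r a)(r,ρ)·(∂_ρ b)(r,ρ) = 4 c e^{r} ρ² + 4 c e^{r}(c² e^{2r} + ω²/r³) > 4(c ρ² + c³). In particular, if a(r,ρ) = 0 and b(r,ρ) = 0 then this Poisson bracket is ≥ 4c³ > 0. -/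
noncomputable section

/-- Real part of the conjugated symbol `p_φ(r,ρ) = (ρ + i c e^r)² + ω²/r²`
with Carleman weight `φ(r) = c e^r`. -/
def reSymb (c ω r ρ : ℝ) : ℝ := ρ ^ 2 - c ^ 2 * Real.exp (2 * r) + ω ^ 2 / r ^ 2

/-- Imaginary part of the conjugated symbol. -/
def imSymb (c r ρ : ℝ) : ℝ := 2 * ρ * c * Real.exp r

/-- The Poisson bracket `{Re p_φ, Im p_φ} = ∂_ρ a · ∂_r b − ∂_r a · ∂_ρ b`. -/
def bracket (c ω r ρ : ℝ) : ℝ :=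
  deriv (fun ρ' => reSymb c ω r ρ') ρ * deriv (fun r' => imSymb c r' ρ) r -
    deriv (fun r' => reSymb c ω r' ρ) r * deriv (fun ρ' => imSymb c r ρ') ρ

/-- The Poisson bracket `∂_ρ a · ∂_r b − ∂_r a · ∂_ρ b` of two functions of `(r, ρ)`. It is written
with `deriv`, so it is meaningful only where `a` and `b` have the partial derivatives involved. -/
def poissonBracket (a b : ℝ → ℝ → ℝ) (r ρ : ℝ) : ℝ :=
  deriv (fun η => a r η) ρ * deriv (fun s => b s ρ) r -
    deriv (fun s => a s ρ) r * deriv (fun η => b r η) ρ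

/-- With `f = φ'`, the two functions are the real and imaginary parts of `(ρ + i φ')² + V`, the
symbol of a Schrödinger operator conjugated by the weight `φ`. -/
theorem poissonBracket_conjugated_symbol {f V : ℝ → ℝ} {f' V' r : ℝ}
    (hf : HasDerivAt f f' r) (hV : HasDerivAt V V' r) (ρ : ℝ) :
    poissonBracket (fun s η => η ^ 2 - f s ^ 2 + V s) (fun s η => 2 * η * f s) r ρ =
      4 * f' * ρ ^ 2 + 4 * f r ^ 2 * f' - 2 * f r * V' := by
  have ha_ρ : HasDerivAt (fun η => η ^ 2 - f r ^ 2 + V r) (2 * ρ) ρ := by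
    simpa using ((hasDerivAt_pow 2 ρ).sub_const (f r ^ 2)).add_const (V r)
  have hb_r : HasDerivAt (fun s => 2 * ρ * f s) (2 * ρ * f') r := hf.const_mul (2 * ρ)
  have ha_r : HasDerivAt (fun s => ρ ^ 2 - f s ^ 2 + V s) (-(2 * f r * f') + V') r := by
    simpa using ((hf.fun_pow 2).const_sub (ρ ^ 2)).fun_add hV
  have hb_ρ : HasDerivAt (fun η => 2 * η * f r) (2 * f r) ρ := by
    simpa using ((hasDerivAt_id ρ).const_mul 2).mul_const (f r)
  rw [poissonBracket, ha_ρ.deriv, hb_r.deriv, ha_r.deriv, hb_ρ.deriv]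
  ring

theorem hasDerivAt_const_div_pow {𝕜 : Type*} [NontriviallyNormedField 𝕜] (k : 𝕜) (n : ℕ)
    {x : 𝕜} (hx : x ≠ 0) : HasDerivAt (fun y => k / y ^ n) (-(n * k) / x ^ (n + 1)) x := by
  have hzpow : HasDerivAt (fun y => k * y ^ (-n : ℤ)) (k * (-n * x ^ (-n - 1 : ℤ))) x := by
    simpa using (hasDerivAt_zpow (-n : ℤ) x (Or.inl hx)).const_mul k
  have hexp : x ^ (-n - 1 : ℤ) = (x ^ (n + 1))⁻¹ := by
    rw [← zpow_natCast, ← zpow_neg, Nat.cast_succ, neg_add']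
  rw [hexp] at hzpow
  convert hzpow using 1
  · simp only [zpow_neg, zpow_natCast, div_eq_mul_inv]
  · ring

theorem bracket_eq (c ω : ℝ) {r : ℝ} (hr : r ≠ 0) (ρ : ℝ) :
    bracket c ω r ρ =
      4 * c * Real.exp r * ρ ^ 2 +
        4 * c * Real.exp r * (c ^ 2 * Real.exp (2 * r) + ω ^ 2 / r ^ 3) := by
  have exp_two_mul (s : ℝ) : Real.exp (2 * s) = Real.exp s ^ 2 := by
    simpa using Real.exp_nat_mul s 2
  have hre : reSymb c ω = fun s η => η ^ 2 - (c * Real.exp s) ^ 2 + ω ^ 2 / s ^ 2 := by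
    funext s η
    rw [reSymb, exp_two_mul, mul_pow]
  have him : imSymb c = fun s η => 2 * η * (c * Real.exp s) := by
    funext s η
    rw [imSymb, mul_assoc]
  calc bracket c ω r ρ = poissonBracket (reSymb c ω) (imSymb c) r ρ := rfl
    _ = 4 * (c * Real.exp r) * ρ ^ 2 + 4 * (c * Real.exp r) ^ 2 * (c * Real.exp r) -
          2 * (c * Real.exp r) * (-(2 * ω ^ 2) / r ^ 3) := by
      rw [hre, him]
      exact poissonBracket_conjugated_symbol ((Real.hasDerivAt_exp r).const_mul c)
        (by simpa using hasDerivAt_const_div_pow (ω ^ 2) 2 hr) ρ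
    _ = _ := by
      rw [exp_two_mul]
      ring

theorem lt_bracket {c r : ℝ} (hc : 0 < c) (hr : 0 < r) (ω ρ : ℝ) :
    4 * (c * ρ ^ 2 + c ^ 3) < bracket c ω r ρ := by
  have one_lt_exp : 1 < Real.exp r := Real.one_lt_exp_iff.2 hr
  have one_lt_exp_two : 1 < Real.exp (2 * r) := Real.one_lt_exp_iff.2 (by positivity)
  have sq_term : 4 * c * 1 * ρ ^ 2 ≤ 4 * c * Real.exp r * ρ ^ 2 := by gcongr
  have weight_term : 4 * c * 1 * (c ^ 2 * 1) <
      4 * c * Real.exp r * (c ^ 2 * Real.exp (2 * r) + ω ^ 2 / r ^ 3) :=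
    calc 4 * c * 1 * (c ^ 2 * 1) < 4 * c * Real.exp r * (c ^ 2 * Real.exp (2 * r)) := by gcongr
      _ ≤ 4 * c * Real.exp r * (c ^ 2 * Real.exp (2 * r) + ω ^ 2 / r ^ 3) := by
        gcongr
        exact le_add_of_nonneg_right (by positivity)
  rw [bracket_eq c ω hr.ne' ρ]
  linarith

theorem stmt4 (c ω : ℝ) (hc : 0 < c) :
    ∀ r : ℝ, 0 < r → ∀ ρ : ℝ,
      bracket c ω r ρ =
          4 * c * Real.exp r * ρ ^ 2 +
            4 * c * Real.exp r * (c ^ 2 * Real.exp (2 * r) + ω ^ 2 / r ^ 3) ∧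
        bracket c ω r ρ > 4 * (c * ρ ^ 2 + c ^ 3) ∧
        (reSymb c ω r ρ = 0 → imSymb c r ρ = 0 →
          bracket c ω r ρ ≥ 4 * c ^ 3) ∧
        0 < 4 * c ^ 3 := by
  intro r hr ρ
  have hlt := lt_bracket hc hr ω ρ
  refine ⟨bracket_eq c ω hr.ne' ρ, hlt, fun _ _ => ?_, by positivity⟩
  calc 4 * c ^ 3 ≤ 4 * (c * ρ ^ 2 + c ^ 3) := by
        gcongr
        exact le_add_of_nonneg_left (by positivity)
    _ ≤ bracket c ω r ρ := hlt.le
end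
end

section
/- Let 0 < r₁ < r₂. There exist constants c > 0, d > 0 and C > 0 such that for all r ∈ [r₁, r₂], ρ ∈ ℝ and ω ∈ ℝ: 8 c e^{r} (ρ² + c² e^{2r} + ω²/r³) + d · ((ρ² − c² e^{2r} + ω²/r²)² + 4 ρ² c² e^{2r}) ≥ C (ρ² + 1)². -/
noncomputable section

/-!
Two lower bounds that hold for every `r > 0` suffice. The Poisson bracket is at least `4 c³`, since
`e ^ r ≥ 1`. The symbol satisfies `|p_φ|² ≥ ρ⁴`: where `ρ² ≤ c² e ^ (2 r)` the imaginary part alone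
is enough, and elsewhere the real part is nonnegative and smallest at `ω = 0`, where
`|p_φ|² = (ρ² + c² e ^ (2 r))²`. The left-hand side is therefore at least `8 c³ + d ρ⁴`, which is
comparable to `(ρ² + 1)²`.
-/

section OrderedRing

variable {R : Type*} [CommRing R] [LinearOrder R] [IsStrictOrderedRing R]

lemma sq_le_sq_sub_add_add_four_mul {x a w : R} (hx : 0 ≤ x) (ha : 0 ≤ a) (hw : 0 ≤ w) :
    x ^ 2 ≤ (x - a + w) ^ 2 + 4 * x * a := by
  rcases le_total x a with hxa | hax
  · calc
      x ^ 2 = x * x := sq x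
      _ ≤ x * a := mul_le_mul_of_nonneg_left hxa hx
      _ ≤ (x - a + w) ^ 2 + 4 * x * a := by
        linarith [mul_nonneg hx ha, sq_nonneg (x - a + w)]
  · have hsub : 0 ≤ x - a := sub_nonneg.mpr hax
    calc
      x ^ 2 ≤ (x + a) ^ 2 := by gcongr; exact le_add_of_nonneg_right ha
      _ = (x - a) ^ 2 + 4 * x * a := by ring
      _ ≤ (x - a + w) ^ 2 + 4 * x * a :=
        add_le_add_left (pow_le_pow_left₀ hsub (le_add_of_nonneg_right hw) 2) _

lemma min_mul_add_one_sq_le {a b : R} (h : 0 ≤ min a b) (x : R) :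
    min a b * (x + 1) ^ 2 ≤ 2 * (a + b * x ^ 2) :=
  calc
    min a b * (x + 1) ^ 2 ≤ min a b * (2 * (x ^ 2 + 1 ^ 2)) := by gcongr; exact add_sq_le
    _ = 2 * (min a b + min a b * x ^ 2) := by ring
    _ ≤ 2 * (a + b * x ^ 2) := by
      gcongr
      · exact min_le_left a b
      · exact min_le_right a b

end OrderedRing

lemma pow_three_le_mul_exp_mul_add {c r s t : ℝ} (hc : 0 ≤ c) (hr : 0 ≤ r) (hs : 0 ≤ s)
    (ht : 0 ≤ t) :
    c ^ 3 ≤ c * Real.exp r * (s + c ^ 2 * Real.exp (2 * r) + t) :=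
  calc
    c ^ 3 = c * 1 * (0 + c ^ 2 * 1 + 0) := by ring
    _ ≤ c * Real.exp r * (s + c ^ 2 * Real.exp (2 * r) + t) := by
      gcongr
      · exact Real.one_le_exp hr
      · exact Real.one_le_exp (by positivity)

theorem stmt6_general {c d : ℝ} (hc : 0 < c) (hd : 0 < d) :
    ∃ C > (0 : ℝ), ∀ r > (0 : ℝ), ∀ ρ ω : ℝ,
      8 * c * Real.exp r * (ρ ^ 2 + c ^ 2 * Real.exp (2 * r) + ω ^ 2 / r ^ 3) +
          d * ((ρ ^ 2 - c ^ 2 * Real.exp (2 * r) + ω ^ 2 / r ^ 2) ^ 2 +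
            4 * ρ ^ 2 * c ^ 2 * Real.exp (2 * r)) ≥
        C * (ρ ^ 2 + 1) ^ 2 := by
  have hmin : 0 < min (8 * c ^ 3) d := lt_min (by positivity) hd
  refine ⟨min (8 * c ^ 3) d / 2, half_pos hmin, fun r hr ρ ω ↦ ?_⟩
  have bracket_bound :
      c ^ 3 ≤ c * Real.exp r * (ρ ^ 2 + c ^ 2 * Real.exp (2 * r) + ω ^ 2 / r ^ 3) :=
    pow_three_le_mul_exp_mul_add hc.le hr.le (by positivity) (by positivity)
  have symbol_bound :
      (ρ ^ 2) ^ 2 ≤ (ρ ^ 2 - c ^ 2 * Real.exp (2 * r) + ω ^ 2 / r ^ 2) ^ 2 +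
        4 * ρ ^ 2 * (c ^ 2 * Real.exp (2 * r)) :=
    sq_le_sq_sub_add_add_four_mul (by positivity) (by positivity) (by positivity)
  calc
    min (8 * c ^ 3) d / 2 * (ρ ^ 2 + 1) ^ 2 ≤ 8 * c ^ 3 + d * (ρ ^ 2) ^ 2 := by
      linarith [min_mul_add_one_sq_le hmin.le (ρ ^ 2)]
    _ ≤ 8 * (c * Real.exp r * (ρ ^ 2 + c ^ 2 * Real.exp (2 * r) + ω ^ 2 / r ^ 3)) +
        d * ((ρ ^ 2 - c ^ 2 * Real.exp (2 * r) + ω ^ 2 / r ^ 2) ^ 2 +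
          4 * ρ ^ 2 * (c ^ 2 * Real.exp (2 * r))) := by gcongr
    _ = _ := by ring

theorem stmt6 (r₁ r₂ : ℝ) (hr₁ : 0 < r₁) (hr₁₂ : r₁ < r₂) :
    ∃ c > (0 : ℝ), ∃ d > (0 : ℝ), ∃ C > (0 : ℝ),
      ∀ r ∈ Set.Icc r₁ r₂, ∀ ρ ω : ℝ,
        8 * c * Real.exp r * (ρ ^ 2 + c ^ 2 * Real.exp (2 * r) + ω ^ 2 / r ^ 3) +
            d * ((ρ ^ 2 - c ^ 2 * Real.exp (2 * r) + ω ^ 2 / r ^ 2) ^ 2 +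
              4 * ρ ^ 2 * c ^ 2 * Real.exp (2 * r)) ≥
          C * (ρ ^ 2 + 1) ^ 2 := by
  obtain ⟨C, hC, hbound⟩ := stmt6_general one_pos one_pos
  exact ⟨1, one_pos, 1, one_pos, C, hC, fun r hr ↦ hbound r (hr₁.trans_le hr.1)⟩
end
end

section
/- Let 0 < r₁ < r₂. There exist constants c > 0, d > 0, C₀ > 0 and h₀ > 0 such that for all h ∈ (0, h₀] and all u ∈ C_c^∞(A(0,r₁,r₂), ℂ), writing φ(x) := c·e^{‖x‖}, A u := e^{φ/h}(−h²Δ)(e^{−φ/h}u) and A* u := e^{−φ/h}(−h²Δ)(e^{φ/h}u), one has (1/h) · Re ∫_{ℝ²} (A*(A u) − A(A* u)) · conj(u) + d ∫_{ℝ²} |A u|² ≥ C₀ ∫_{ℝ²} (|u|² + |h∇u|²). -/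
open MeasureTheory Metric Set

noncomputable section

/-- Squared Euclidean norm of the gradient of a complex-valued function. -/
def gradSq (u : E2 → ℂ) (x : E2) : ℝ := ∑ i, ‖fderiv ℝ u x (basis2 i)‖ ^ 2

/-!
The commutator `[A*, A]` is computed exactly: integrating by parts its only term with derivatives
of `u`, one finds

  `(1/h) ⟨[A*, A]u, u⟩ = ∫ 8 h² φ''(∇ū, ∇u) + (8 φ''(∇φ, ∇φ) - 2 h² Δ²φ) |u|²`.

The weight `φ = e^{|x|}` has positive definite Hessian and no critical point away from the origin,
so on the annulus both `φ''` and `φ''(∇φ, ∇φ)` are bounded below by a positive constant; for small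
`h` the bi-Laplacian term is absorbed.  Thus the commutator alone controls the semiclassical `H¹`
norm, and `d ‖Au‖²` only helps.
-/

section Derivations

variable {ι 𝕜 R : Type*} [Fintype ι] [CommRing 𝕜] [CommRing R] [Algebra 𝕜 R]
  (D : ι → Derivation 𝕜 R R)

/-- The Laplacian `∑ᵢ Dᵢ²` of a finite family of derivations of a commutative algebra. -/
def laplace : R →ₗ[𝕜] R := ∑ i, (D i : R →ₗ[𝕜] R) ∘ₗ (D i : R →ₗ[𝕜] R)

/-- The gradient vector field `∇p · ∇ = ∑ᵢ (Dᵢ p) Dᵢ` of `p`, as a derivation. -/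
def gradField (p : R) : Derivation 𝕜 R R := ∑ i, D i p • D i

/-- The Hessian `∑ᵢⱼ (DᵢDⱼp) aᵢ bⱼ` of `p`, as a bilinear form in the coefficient vectors. -/
def hessForm (p : R) (a b : ι → R) : R := ∑ i, ∑ j, D i (D j p) * (a i * b j)

/-- The divergence `∑ᵢ Dᵢ(∑ⱼ (DᵢDⱼp) Dⱼu)` of the Hessian of `p` applied to the gradient of `u`. -/
def hessDiv (p u : R) : R := ∑ i, D i (∑ j, D i (D j p) * D j u)

/-- The conjugated Laplacian `e^p Δ e^{-p}`, expanded so that it makes sense without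
exponentials. -/
def conjLaplace (p u : R) : R :=
  laplace D u - 2 * gradField D p u - laplace D p * u + gradField D p p * u

/-- The commutator `[A', A]u` of `A = e^p Δ e^{-p}` and its formal adjoint `A' = e^{-p} Δ e^p`. -/
def conjLaplaceCommutator (p u : R) : R :=
  conjLaplace D (-p) (conjLaplace D p u) - conjLaplace D p (conjLaplace D (-p) u)

lemma laplace_apply (u : R) : laplace D u = ∑ i, D i (D i u) := by
  simp [laplace]

lemma gradField_apply (p u : R) : gradField D p u = ∑ i, D i p * D i u := by
  have := map_sum Derivation.coeFnAddMonoidHom (fun i => D i p • D i) Finset.univ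
  exact (congrFun this u).trans (by simp [Derivation.coeFnAddMonoidHom])

lemma gradField_neg (p : R) : gradField D (-p) = -gradField D p := by
  simp [gradField]

lemma laplace_mul (f g : R) :
    laplace D (f * g) = f * laplace D g + 2 * gradField D f g + g * laplace D f := by
  simp only [laplace_apply, gradField_apply, Finset.mul_sum, ← Finset.sum_add_distrib]
  refine Finset.sum_congr rfl fun i _ => ?_
  simp only [Derivation.leibniz, smul_eq_mul, map_add]
  ring

lemma conjLaplace_smul (p : R) (c : 𝕜) (u : R) :
    conjLaplace D p (c • u) = c • conjLaplace D p u := by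
  simp only [conjLaplace, map_smul, Derivation.map_smul, mul_smul_comm, smul_sub, smul_add]

lemma mul_laplace_mul_eq_conjLaplace {p e e' : R} (u : R) (inv : e' * e = 1)
    (deriv_e : ∀ i, D i e = -(D i p * e)) :
    e' * laplace D (e * u) = conjLaplace D p u := by
  have grad_e : ∀ f, gradField D e f = -(gradField D p f * e) := fun f => by
    simp only [gradField_apply, deriv_e, Finset.sum_mul, ← Finset.sum_neg_distrib]
    exact Finset.sum_congr rfl fun i _ => by ring
  have laplace_e : laplace D e = (gradField D p p - laplace D p) * e := by
    simp only [laplace_apply, gradField_apply, ← Finset.sum_sub_distrib, Finset.sum_mul]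
    refine Finset.sum_congr rfl fun i _ => ?_
    simp only [deriv_e, map_neg, Derivation.leibniz, smul_eq_mul]
    ring
  rw [laplace_mul, grad_e, laplace_e, conjLaplace]
  linear_combination (laplace D u - 2 * gradField D p u - laplace D p * u
    + gradField D p p * u) * inv

lemma gradField_gradField_self (p : R) :
    gradField D p (gradField D p p) = 2 * hessForm D p (fun i => D i p) (fun j => D j p) := by
  rw [gradField_apply, gradField_apply, hessForm]
  simp only [map_sum, Finset.mul_sum, Derivation.leibniz, smul_eq_mul]
  exact Finset.sum_congr rfl fun i _ => Finset.sum_congr rfl fun j _ => by ring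

lemma hessDiv_mul (p u g : R) :
    hessDiv D p u * g =
      ∑ i, D i ((∑ j, D i (D j p) * D j u) * g)
        - hessForm D p (fun i => D i g) (fun j => D j u) := by
  simp only [hessDiv, hessForm, Finset.sum_mul _ _ g, ← Finset.sum_sub_distrib]
  refine Finset.sum_congr rfl fun i _ => ?_
  rw [← Finset.sum_mul, Derivation.leibniz, smul_eq_mul, smul_eq_mul, Finset.sum_mul]
  simp only [mul_comm (D i g), ← mul_assoc]
  ring

variable {D}

-- The summand for `(i, j)` is `(fg)'' = 2 (f'g)' - f''g + f g''` with `f = Dⱼp`, `g = Dⱼu`.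
lemma laplace_gradField (commute : ∀ i j f, D i (D j f) = D j (D i f)) (p u : R) :
    laplace D (gradField D p u) =
      2 * hessDiv D p u - gradField D (laplace D p) u + gradField D p (laplace D u) := by
  simp only [gradField_apply, laplace_apply, hessDiv]
  simp only [map_sum, Finset.mul_sum, Finset.sum_mul]
  rw [Finset.sum_comm (f := fun j i => D j (D i (D i p)) * D j u),
    Finset.sum_comm (f := fun j i => D j p * D j (D i (D i u)))]
  simp only [← Finset.sum_sub_distrib, ← Finset.sum_add_distrib]
  refine Finset.sum_congr rfl fun i _ => Finset.sum_congr rfl fun j _ => ?_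
  rw [commute j i (D i p), commute j i p, commute j i (D i u), commute j i u]
  simp only [Derivation.leibniz, smul_eq_mul, map_add]
  ring

-- With `S = Δ + |∇p|²` and `T = 2 ∇p·∇ + Δp` one has `conjLaplace p = S - T` and
-- `conjLaplace (-p) = S + T`, so the commutator is `2 (T S - S T)`.
theorem conjLaplaceCommutator_eq (commute : ∀ i j f, D i (D j f) = D j (D i f)) (p u : R) :
    conjLaplaceCommutator D p u =
      -8 * hessDiv D p u - 2 * laplace D (laplace D p) * u
        + 8 * hessForm D p (fun i => D i p) (fun j => D j p) * u := by
  have hess_grad := gradField_gradField_self D p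
  have laplace_grad := laplace_gradField commute p u
  simp only [conjLaplaceCommutator, conjLaplace, gradField_neg, Derivation.neg_apply, map_neg,
    map_add, map_sub, two_mul, Derivation.leibniz, smul_eq_mul, neg_mul, laplace_mul]
  linear_combination 4 * u * hess_grad - 4 * laplace_grad

variable (D) in
/-- The density obtained from `[A', A]u · ū`, where `A = e^p Δ e^{-p}`, by integrating its
second-order term by parts. -/
def commutatorDensity [StarRing R] (p u : R) : R :=
  8 * hessForm D p (fun i => star (D i u)) (fun j => D j u)
    + (8 * hessForm D p (fun i => D i p) (fun j => D j p) - 2 * laplace D (laplace D p))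
      * (u * star u)

lemma conjLaplaceCommutator_mul_star [StarRing R]
    (commute : ∀ i j f, D i (D j f) = D j (D i f)) (deriv_star : ∀ i f, D i (star f) = star (D i f))
    (p u : R) :
    conjLaplaceCommutator D p u * star u =
      commutatorDensity D p u - 8 * ∑ i, D i ((∑ j, D i (D j p) * D j u) * star u) := by
  have div_mul := hessDiv_mul D p u (star u)
  simp only [deriv_star] at div_mul
  rw [conjLaplaceCommutator_eq commute, commutatorDensity]
  linear_combination -8 * div_mul

lemma pow_three_smul_commutatorDensity_inv_smul {𝕜 R : Type*} [Field 𝕜] [CommRing R] [Algebra 𝕜 R]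
    [StarRing R] (D : ι → Derivation 𝕜 R R) {h : 𝕜} (hh : h ≠ 0) (q u : R) :
    h ^ 3 • commutatorDensity D (h⁻¹ • q) u =
      8 * h ^ 2 • hessForm D q (fun i => star (D i u)) (fun j => D j u)
        + (8 * hessForm D q (fun i => D i q) (fun j => D j q)
            - 2 * h ^ 2 • laplace D (laplace D q)) * (u * star u) := by
  simp only [commutatorDensity, hessForm, map_smul, Derivation.map_smul, smul_mul_assoc,
    mul_smul_comm, ← Finset.smul_sum, smul_add, smul_sub, sub_mul, smul_smul]
  field_simp
  rw [one_smul]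

end Derivations

section SmoothFunctions

open scoped ContDiff

variable {E : Type*} [NormedAddCommGroup E] [NormedSpace ℝ E]

variable (E) in
/-- The star algebra of smooth complex-valued functions on a real normed space; smoothness is
over `ℝ`. -/
def smoothStarSubalgebra : StarSubalgebra ℂ (E → ℂ) where
  carrier := {f | ContDiff ℝ ∞ f}
  mul_mem' := fun (hf : ContDiff ℝ ∞ _) (hg : ContDiff ℝ ∞ _) => hf.mul hg
  add_mem' := fun (hf : ContDiff ℝ ∞ _) (hg : ContDiff ℝ ∞ _) => hf.add hg
  algebraMap_mem' c := show ContDiff ℝ ∞ (fun _ : E => c) from contDiff_const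
  star_mem' := fun (hf : ContDiff ℝ ∞ _) => Complex.conjCLE.contDiff.comp hf

variable (E) in
/-- The type of smooth complex-valued functions on `E`. -/
abbrev SmoothFun : Type _ := smoothStarSubalgebra E

namespace SmoothFun

lemma contDiff (f : SmoothFun E) : ContDiff ℝ ∞ (f : E → ℂ) := f.2

lemma continuous (f : SmoothFun E) : Continuous (f : E → ℂ) := f.contDiff.continuous

lemma differentiable (f : SmoothFun E) : Differentiable ℝ (f : E → ℂ) :=
  f.contDiff.differentiable (by simp)

/-- The directional derivative along `v`, as a derivation of the algebra of smooth functions. -/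
def dirDeriv (v : E) : Derivation ℂ (SmoothFun E) (SmoothFun E) :=
  Derivation.mk'
    { toFun f := ⟨fun x => fderiv ℝ (f : E → ℂ) x v,
        (f.contDiff.fderiv_right (m := ∞) le_rfl).clm_apply contDiff_const⟩
      map_add' f g := by
        ext x
        exact DFunLike.congr_fun (fderiv_add (f.differentiable x) (g.differentiable x)) v
      map_smul' c f := by
        ext x
        exact DFunLike.congr_fun (fderiv_const_smul (f.differentiable x) c) v }
    fun f g => by
      ext x
      exact DFunLike.congr_fun (fderiv_mul (f.differentiable x) (g.differentiable x)) v

lemma dirDeriv_apply (v : E) (f : SmoothFun E) (x : E) :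
    (dirDeriv v f : E → ℂ) x = fderiv ℝ (f : E → ℂ) x v := rfl

lemma dirDeriv_dirDeriv_apply (v w : E) (f : SmoothFun E) (x : E) :
    (dirDeriv v (dirDeriv w f) : E → ℂ) x = fderiv ℝ (fderiv ℝ (f : E → ℂ)) x v w := by
  have diff : Differentiable ℝ (fderiv ℝ (f : E → ℂ)) :=
    (f.contDiff.fderiv_right (m := ∞) le_rfl).differentiable (by simp)
  change fderiv ℝ (fun y => fderiv ℝ (f : E → ℂ) y w) x v = _
  rw [fderiv_clm_apply (diff x) (differentiableAt_const w)]
  simp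

lemma dirDeriv_comm (v w : E) (f : SmoothFun E) :
    dirDeriv v (dirDeriv w f) = dirDeriv w (dirDeriv v f) := by
  have two_le : minSmoothness ℝ 2 ≤ (∞ : WithTop ℕ∞) := by
    rw [minSmoothness_of_isRCLikeNormedField]
    exact WithTop.coe_le_coe.2 (le_top : (2 : ℕ∞) ≤ ⊤)
  ext x
  rw [dirDeriv_dirDeriv_apply, dirDeriv_dirDeriv_apply]
  exact f.contDiff.contDiffAt.isSymmSndFDerivAt two_le v w

lemma dirDeriv_star (v : E) (f : SmoothFun E) : dirDeriv v (star f) = star (dirDeriv v f) := by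
  ext x
  exact DFunLike.congr_fun (Complex.conjCLE.toContinuousLinearMap.hasFDerivAt.comp x
    (f.differentiable x).hasFDerivAt).fderiv v

/-- A smooth real-valued function, regarded as complex-valued. -/
def ofReal {ψ : E → ℝ} (hψ : ContDiff ℝ ∞ ψ) : SmoothFun E :=
  ⟨fun x => (ψ x : ℂ), Complex.ofRealCLM.contDiff.comp hψ⟩

lemma dirDeriv_ofReal {ψ : E → ℝ} (hψ : ContDiff ℝ ∞ ψ) (v : E) (x : E) :
    (dirDeriv v (ofReal hψ) : E → ℂ) x = (fderiv ℝ ψ x v : ℝ) :=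
  DFunLike.congr_fun (Complex.ofRealCLM.hasFDerivAt.comp x
    (hψ.differentiable (by simp) x).hasFDerivAt).fderiv v

lemma dirDeriv_dirDeriv_ofReal {ψ : E → ℝ} (hψ : ContDiff ℝ ∞ ψ) (v w : E) (x : E) :
    (dirDeriv v (dirDeriv w (ofReal hψ)) : E → ℂ) x = (fderiv ℝ (fderiv ℝ ψ) x v w : ℝ) := by
  have hdψ : ContDiff ℝ ∞ (fderiv ℝ ψ) := hψ.fderiv_right le_rfl
  have deriv_eq : dirDeriv w (ofReal hψ) = ofReal (hdψ.clm_apply contDiff_const) :=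
    Subtype.ext (funext (dirDeriv_ofReal hψ w))
  rw [deriv_eq, dirDeriv_ofReal,
    fderiv_clm_apply (hdψ.differentiable (by simp) x) (differentiableAt_const w)]
  simp

/-- The exponential of a smooth function. -/
def exp (p : SmoothFun E) : SmoothFun E :=
  ⟨fun x => Complex.exp ((p : E → ℂ) x), p.contDiff.cexp⟩

lemma dirDeriv_exp (v : E) (p : SmoothFun E) : dirDeriv v (exp p) = dirDeriv v p * exp p := by
  ext x
  exact (DFunLike.congr_fun (p.differentiable x).hasFDerivAt.cexp.fderiv v).trans (mul_comm _ _)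

lemma exp_mul_exp_neg (p : SmoothFun E) : exp p * exp (-p) = 1 := by
  ext x
  exact (Complex.exp_add _ _).symm.trans (by simp)

variable {ι : Type*} [Fintype ι]

/-- The directional derivatives along a family of vectors. -/
abbrev dirDerivs (v : ι → E) : ι → Derivation ℂ (SmoothFun E) (SmoothFun E) :=
  fun i => dirDeriv (v i)

lemma exp_mul_laplace_exp_neg_mul (v : ι → E) (p u : SmoothFun E) :
    exp p * laplace (dirDerivs v) (exp (-p) * u) = conjLaplace (dirDerivs v) p u :=
  mul_laplace_mul_eq_conjLaplace _ u (exp_mul_exp_neg p) fun i => by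
    rw [dirDeriv_exp, map_neg]
    exact neg_mul (dirDeriv (v i) p) (exp (-p))

lemma hessForm_apply (v : ι → E) (p : SmoothFun E) (a b : ι → SmoothFun E) (x : E) :
    (hessForm (dirDerivs v) p a b).1 x =
      ∑ i, ∑ j, (dirDeriv (v i) (dirDeriv (v j) p)).1 x * ((a i).1 x * (b j).1 x) := by
  simp [hessForm]

lemma dirDeriv_apply_of_notMem_tsupport (v : E) {f : SmoothFun E} {x : E}
    (hx : x ∉ tsupport f.1) : (dirDeriv v f).1 x = 0 := by
  rw [dirDeriv_apply, (notMem_tsupport_iff_eventuallyEq.1 hx).fderiv_eq]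
  simp

lemma commutatorDensity_apply_of_notMem_tsupport (v : ι → E) (p : SmoothFun E) {u : SmoothFun E}
    {x : E} (hx : x ∉ tsupport u.1) : (commutatorDensity (dirDerivs v) p u).1 x = 0 := by
  simp [commutatorDensity, hessForm_apply, dirDeriv_apply_of_notMem_tsupport _ hx,
    image_eq_zero_of_notMem_tsupport hx]

/-- The density `|u|² + |h∇u|²` of the semiclassical `H¹` norm, the gradient being taken along
the vectors `v`. -/
def sobolevDensity (v : ι → E) (h : ℝ) (u : SmoothFun E) (x : E) : ℝ :=
  ‖u.1 x‖ ^ 2 + h ^ 2 * ∑ i, ‖(dirDeriv (v i) u).1 x‖ ^ 2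

lemma sobolevDensity_of_notMem_tsupport (v : ι → E) (h : ℝ) {u : SmoothFun E} {x : E}
    (hx : x ∉ tsupport u.1) : sobolevDensity v h u x = 0 := by
  simp [sobolevDensity, image_eq_zero_of_notMem_tsupport hx,
    dirDeriv_apply_of_notMem_tsupport _ hx]

lemma continuous_sobolevDensity (v : ι → E) (h : ℝ) (u : SmoothFun E) :
    Continuous (sobolevDensity v h u) :=
  (u.continuous.norm.pow 2).add (continuous_const.mul (continuous_finsetSum _ fun i _ =>
    (dirDeriv (v i) u).continuous.norm.pow 2))

section Integral

variable [MeasurableSpace E] [BorelSpace E] {μ : Measure E}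

lemma integrable [IsFiniteMeasureOnCompacts μ] {f : SmoothFun E}
    (hf : HasCompactSupport (f : E → ℂ)) : Integrable (f : E → ℂ) μ :=
  f.continuous.integrable_of_hasCompactSupport hf

lemma integrable_sobolevDensity [IsFiniteMeasureOnCompacts μ] (v : ι → E) (h : ℝ) {u : SmoothFun E}
    (hu : HasCompactSupport u.1) : Integrable (sobolevDensity v h u) μ :=
  (continuous_sobolevDensity v h u).integrable_of_hasCompactSupport
    (.intro hu fun _ => sobolevDensity_of_notMem_tsupport v h)

lemma integrable_commutatorDensity [IsFiniteMeasureOnCompacts μ] (v : ι → E) (p : SmoothFun E)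
    {u : SmoothFun E} (hu : HasCompactSupport u.1) :
    Integrable (commutatorDensity (dirDerivs v) p u).1 μ :=
  integrable (.intro hu fun _ => commutatorDensity_apply_of_notMem_tsupport v p)

variable [FiniteDimensional ℝ E] [μ.IsAddHaarMeasure]

lemma integral_dirDeriv_eq_zero (v : E) {f : SmoothFun E} (hf : HasCompactSupport (f : E → ℂ)) :
    ∫ x, (dirDeriv v f : E → ℂ) x ∂μ = 0 := by
  have deriv_integrable : Integrable (fun x => fderiv ℝ (f : E → ℂ) x v) μ :=
    integrable (f := dirDeriv v f) (hf.fderiv_apply (𝕜 := ℝ) v)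
  have by_parts := integral_mul_fderiv_eq_neg_fderiv_mul_of_integrable (μ := μ) (𝕜 := ℂ)
    (f := fun _ => 1) (g := f) (v := v) (by simp) (by simpa using deriv_integrable)
    (by simpa using integrable hf) (fun x _ => differentiableAt_const _)
    (fun x _ => f.differentiable x)
  simpa [dirDeriv_apply] using by_parts

theorem integral_conjLaplaceCommutator_mul_star (v : ι → E) (p : SmoothFun E) {u : SmoothFun E}
    (hu : HasCompactSupport u.1) :
    ∫ x, (conjLaplaceCommutator (dirDerivs v) p u * star u).1 x ∂μ =
      ∫ x, (commutatorDensity (dirDerivs v) p u).1 x ∂μ := by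
  set flux : ι → SmoothFun E := fun i =>
    (∑ j, dirDeriv (v i) (dirDeriv (v j) p) * dirDeriv (v j) u) * star u
  have flux_compact (i : ι) : HasCompactSupport (flux i).1 :=
    (hu.comp_left (map_zero (starRingEnd ℂ))).mul_left
  have div_integrable (i : ι) : Integrable (dirDeriv (v i) (flux i)).1 μ :=
    integrable ((flux_compact i).fderiv_apply (𝕜 := ℝ) (v i))
  rw [conjLaplaceCommutator_mul_star (fun i j => dirDeriv_comm (v i) (v j))
    (fun i => dirDeriv_star (v i))]
  calc ∫ x, (commutatorDensity (dirDerivs v) p u - 8 * ∑ i, dirDeriv (v i) (flux i)).1 x ∂μ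
    _ = ∫ x, ((commutatorDensity (dirDerivs v) p u).1 x
          - 8 * ∑ i, (dirDeriv (v i) (flux i)).1 x) ∂μ := by
      refine integral_congr_ae (.of_forall fun x => ?_)
      simp only [AddSubgroupClass.coe_sub, MulMemClass.coe_mul, AddSubmonoidClass.coe_finsetSum,
        Pi.sub_apply, Pi.mul_apply, Finset.sum_apply]
      rfl
    _ = ∫ x, (commutatorDensity (dirDerivs v) p u).1 x ∂μ := by
      rw [integral_sub (integrable_commutatorDensity v p hu)
        ((integrable_finsetSum _ fun i _ => div_integrable i).const_mul 8), integral_const_mul,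
        integral_finsetSum _ fun i _ => div_integrable i]
      simp [integral_dirDeriv_eq_zero, flux_compact]

lemma mul_integral_sobolevDensity_le (v : ι → E) (p : SmoothFun E) {u : SmoothFun E}
    (hu : HasCompactSupport u.1) {h m c : ℝ}
    (pointwise : ∀ x ∈ tsupport u.1, m * sobolevDensity v h u x ≤
      c * ((commutatorDensity (dirDerivs v) p u).1 x).re) :
    m * ∫ x, sobolevDensity v h u x ∂μ ≤
      c * (∫ x, (conjLaplaceCommutator (dirDerivs v) p u * star u).1 x ∂μ).re := by
  have density_integrable := integrable_commutatorDensity (μ := μ) v p hu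
  have re_integral : ∫ x, ((commutatorDensity (dirDerivs v) p u).1 x).re ∂μ =
      (∫ x, (commutatorDensity (dirDerivs v) p u).1 x ∂μ).re := integral_re density_integrable
  rw [integral_conjLaplaceCommutator_mul_star v p hu, ← re_integral, ← integral_const_mul,
    ← integral_const_mul]
  refine integral_mono ((integrable_sobolevDensity v h hu).const_mul m)
    (density_integrable.re.const_mul c) fun x => ?_
  by_cases hx : x ∈ tsupport u.1
  · exact pointwise x hx
  · simp [sobolevDensity_of_notMem_tsupport v h hx,
      commutatorDensity_apply_of_notMem_tsupport v p hx]

end Integral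

end SmoothFun

end SmoothFunctions

section BilinearForms

variable {ι X E : Type*} [NormedAddCommGroup E] [NormedSpace ℝ E]

lemma bilinear_sum_smul_sum_smul [Fintype ι] (B : E →L[ℝ] E →L[ℝ] ℝ) (v : ι → E) (s t : ι → ℝ) :
    B (∑ i, s i • v i) (∑ j, t j • v j) = ∑ i, ∑ j, B (v i) (v j) * (s i * t j) := by
  simp only [map_sum, map_smul, sum_apply, smul_apply, smul_eq_mul, Finset.mul_sum]
  rw [Finset.sum_comm]
  exact Finset.sum_congr rfl fun i _ => Finset.sum_congr rfl fun j _ => by ring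

lemma exists_forall_mul_norm_sq_le [TopologicalSpace X] [FiniteDimensional ℝ E]
    {B : X → E →L[ℝ] E →L[ℝ] ℝ} {K : Set X} (hB : ContinuousOn B K) (hK : IsCompact K)
    (pos : ∀ x ∈ K, ∀ w ≠ 0, 0 < B x w w) :
    ∃ m > 0, ∀ x ∈ K, ∀ w, m * ‖w‖ ^ 2 ≤ B x w w := by
  have cont : ContinuousOn (fun y : X × E => B y.1 y.2 y.2) (K ×ˢ sphere 0 1) :=
    ((hB.comp continuousOn_fst fun y hy => hy.1).clm_apply continuousOn_snd).clm_apply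
      continuousOn_snd
  obtain ⟨m, hm, le⟩ := (hK.prod (isCompact_sphere (0 : E) 1)).exists_forall_le' cont (a := 0)
    fun y hy => pos y.1 hy.1 y.2 (ne_zero_of_mem_unit_sphere ⟨y.2, hy.2⟩)
  refine ⟨m, hm, fun x hx w => ?_⟩
  obtain rfl | hw := eq_or_ne w 0
  · simp
  have unit_le := le (x, ‖w‖⁻¹ • w) ⟨hx, by simp [norm_smul, hw]⟩
  have : 0 < ‖w‖ := norm_pos_iff.2 hw
  simp only [map_smul, smul_apply, smul_eq_mul] at unit_le
  field_simp at unit_le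
  exact unit_le

end BilinearForms

section OrthonormalBasis

variable {ι E : Type*} [Fintype ι] [NormedAddCommGroup E] [InnerProductSpace ℝ E]
  (b : OrthonormalBasis ι ℝ E)

lemma mul_sum_norm_sq_le_re_hermitian {B : E →L[ℝ] E →L[ℝ] ℝ} {m : ℝ}
    (hB : ∀ w, m * ‖w‖ ^ 2 ≤ B w w) (z : ι → ℂ) :
    m * ∑ i, ‖z i‖ ^ 2 ≤ (∑ i, ∑ j, (B (b i) (b j) : ℂ) * (starRingEnd ℂ (z i) * z j)).re := by
  have real_bound (s : ι → ℝ) : m * ∑ i, s i ^ 2 ≤ ∑ i, ∑ j, B (b i) (b j) * (s i * s j) := by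
    have norm_sq : ‖∑ i, s i • b i‖ ^ 2 = ∑ i, s i ^ 2 := by
      simp only [← b.sum_sq_norm_inner_right, b.orthonormal.inner_right_fintype,
        Real.norm_eq_abs, sq_abs]
    simpa only [norm_sq, bilinear_sum_smul_sum_smul] using hB (∑ i, s i • b i)
  have split_re_im : (∑ i, ∑ j, (B (b i) (b j) : ℂ) * (starRingEnd ℂ (z i) * z j)).re =
      ∑ i, ∑ j, B (b i) (b j) * ((z i).re * (z j).re)
        + ∑ i, ∑ j, B (b i) (b j) * ((z i).im * (z j).im) := by
    simp only [Complex.re_sum, Complex.re_ofReal_mul, ← Finset.sum_add_distrib]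
    exact Finset.sum_congr rfl fun i _ => Finset.sum_congr rfl fun j _ => by simp; ring
  have norm_sq : ∑ i, ‖z i‖ ^ 2 = ∑ i, (z i).re ^ 2 + ∑ i, (z i).im ^ 2 := by
    simp only [Complex.sq_norm, Complex.normSq_apply, Finset.sum_add_distrib, ← sq]
  rw [split_re_im, norm_sq, mul_add]
  exact add_le_add (real_bound _) (real_bound _)

lemma sum_bilinear_fderiv_eq_gradient [CompleteSpace E] (B : E →L[ℝ] E →L[ℝ] ℝ) (ψ : E → ℝ)
    (x : E) :
    ∑ i, ∑ j, B (b i) (b j) * (fderiv ℝ ψ x (b i) * fderiv ℝ ψ x (b j)) =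
      B (gradient ψ x) (gradient ψ x) := by
  have gradient_eq : gradient ψ x = ∑ i, fderiv ℝ ψ x (b i) • b i := by
    refine (b.sum_repr' _).symm.trans (Finset.sum_congr rfl fun i _ => ?_)
    rw [← toDual_gradient, InnerProductSpace.toDual_apply_apply, real_inner_comm]
  rw [gradient_eq, bilinear_sum_smul_sum_smul]

end OrthonormalBasis

section CommutatorBound

open scoped ContDiff

open SmoothFun

variable {ι E : Type*} [Fintype ι] [NormedAddCommGroup E] [InnerProductSpace ℝ E]
  (b : OrthonormalBasis ι ℝ E) {ψ : E → ℝ} (hψ : ContDiff ℝ ∞ ψ)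

lemma mul_sum_norm_sq_le_re_hessForm {m : ℝ} {x : E}
    (hess : ∀ w, m * ‖w‖ ^ 2 ≤ fderiv ℝ (fderiv ℝ ψ) x w w) (u : SmoothFun E) :
    m * ∑ i, ‖(dirDeriv (b i) u).1 x‖ ^ 2 ≤
      ((hessForm (dirDerivs b) (ofReal hψ) (fun i => star (dirDeriv (b i) u))
        (fun j => dirDeriv (b j) u)).1 x).re := by
  simp only [hessForm_apply, dirDeriv_dirDeriv_ofReal]
  exact mul_sum_norm_sq_le_re_hermitian b hess fun i => (dirDeriv (b i) u).1 x

lemma hessForm_dirDeriv_self_apply [CompleteSpace E] (x : E) :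
    (hessForm (dirDerivs b) (ofReal hψ) (fun i => dirDeriv (b i) (ofReal hψ))
        (fun j => dirDeriv (b j) (ofReal hψ))).1 x =
      (fderiv ℝ (fderiv ℝ ψ) x (gradient ψ x) (gradient ψ x) : ℝ) := by
  simp only [hessForm_apply, dirDeriv_dirDeriv_ofReal, dirDeriv_ofReal,
    ← sum_bilinear_fderiv_eq_gradient b]
  push_cast
  rfl

lemma pow_three_mul_re_commutatorDensity_apply [CompleteSpace E] {h : ℝ} (hh : h ≠ 0)
    (u : SmoothFun E) (x : E) :
    h ^ 3 * ((commutatorDensity (dirDerivs b) ((h : ℂ)⁻¹ • ofReal hψ) u).1 x).re =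
      h ^ 2 * (8 * ((hessForm (dirDerivs b) (ofReal hψ) (fun i => star (dirDeriv (b i) u))
          (fun j => dirDeriv (b j) u)).1 x).re)
        + (8 * fderiv ℝ (fderiv ℝ ψ) x (gradient ψ x) (gradient ψ x)
          - 2 * (h ^ 2 * ((laplace (dirDerivs b) (laplace (dirDerivs b) (ofReal hψ))).1 x).re))
          * ‖u.1 x‖ ^ 2 := by
  have re_smul (f : SmoothFun E) : h ^ 3 * (f.1 x).re = (((h : ℂ) ^ 3 • f).1 x).re := by
    rw [← Complex.ofReal_pow]
    exact (Complex.re_ofReal_mul _ _).symm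
  rw [re_smul, pow_three_smul_commutatorDensity_inv_smul _ (mod_cast hh), ← Complex.ofReal_pow]
  set H := hessForm (dirDerivs b) (ofReal hψ) (fun i => star (dirDeriv (b i) u))
    (fun j => dirDeriv (b j) u)
  set G := hessForm (dirDerivs b) (ofReal hψ) (fun i => dirDeriv (b i) (ofReal hψ))
    (fun j => dirDeriv (b j) (ofReal hψ)) with hG
  set L := laplace (dirDerivs b) (laplace (dirDerivs b) (ofReal hψ))
  change (8 * (((h ^ 2 : ℝ) : ℂ) * H.1 x) + (8 * G.1 x - 2 * (((h ^ 2 : ℝ) : ℂ) * L.1 x))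
    * (u.1 x * starRingEnd ℂ (u.1 x))).re = _
  rw [hG, hessForm_dirDeriv_self_apply, Complex.mul_conj', ← Complex.ofReal_pow]
  simp only [Complex.add_re, Complex.sub_re, Complex.mul_re, Complex.re_ofNat, Complex.im_ofNat,
    Complex.ofReal_re, Complex.ofReal_im]
  ring

lemma mul_sobolevDensity_le [CompleteSpace E] {m M h : ℝ} {x : E}
    (hess : ∀ w, m * ‖w‖ ^ 2 ≤ fderiv ℝ (fderiv ℝ ψ) x w w)
    (hess_grad : m ≤ fderiv ℝ (fderiv ℝ ψ) x (gradient ψ x) (gradient ψ x))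
    (bilaplace : ‖(laplace (dirDerivs b) (laplace (dirDerivs b) (ofReal hψ))).1 x‖ ≤ M)
    (hm : 0 ≤ m) (h_pos : 0 < h) (h_small : h ^ 2 * M ≤ m) (u : SmoothFun E) :
    m * sobolevDensity b h u x ≤
      h ^ 3 * ((commutatorDensity (dirDerivs b) ((h : ℂ)⁻¹ • ofReal hψ) u).1 x).re := by
  have grad_term := mul_sum_norm_sq_le_re_hessForm b hψ hess u
  have bilaplace_term :=
    calc h ^ 2 * ((laplace (dirDerivs b) (laplace (dirDerivs b) (ofReal hψ))).1 x).re
      _ ≤ h ^ 2 * M := by gcongr; exact (Complex.re_le_norm _).trans bilaplace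
      _ ≤ m := h_small
  have grad_nonneg : 0 ≤ m * ∑ i, ‖(dirDeriv (b i) u).1 x‖ ^ 2 := by positivity
  calc m * sobolevDensity b h u x
    _ = h ^ 2 * (m * ∑ i, ‖(dirDeriv (b i) u).1 x‖ ^ 2) + m * ‖u.1 x‖ ^ 2 := by
      rw [sobolevDensity]
      ring
    _ ≤ _ := by
      rw [pow_three_mul_re_commutatorDensity_apply b hψ h_pos.ne']
      refine add_le_add (mul_le_mul_of_nonneg_left ?_ (sq_nonneg h))
        (mul_le_mul_of_nonneg_right ?_ (sq_nonneg _)) <;> linarith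

theorem exists_pos_mul_sobolevDensity_le [FiniteDimensional ℝ E] {K : Set E}
    (hK : IsCompact K)
    (hess_pos : ∀ x ∈ K, ∀ w ≠ 0, 0 < fderiv ℝ (fderiv ℝ ψ) x w w)
    (fderiv_ne : ∀ x ∈ K, fderiv ℝ ψ x ≠ 0) :
    ∃ m > (0 : ℝ), ∃ h₀ > (0 : ℝ), ∀ h : ℝ, 0 < h → h ≤ h₀ → ∀ u : SmoothFun E, ∀ x ∈ K,
      m * sobolevDensity b h u x ≤
        h ^ 3 * ((commutatorDensity (dirDerivs b) ((h : ℂ)⁻¹ • ofReal hψ) u).1 x).re := by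
  have deriv_smooth : ContDiff ℝ ∞ (fderiv ℝ ψ) := hψ.fderiv_right le_rfl
  have hess_cont : Continuous (fderiv ℝ (fderiv ℝ ψ)) :=
    (deriv_smooth.fderiv_right (m := ∞) le_rfl).continuous
  have grad_cont : Continuous (gradient ψ) :=
    (InnerProductSpace.toDual ℝ E).symm.continuous.comp deriv_smooth.continuous
  obtain ⟨m₁, m₁_pos, hess⟩ := exists_forall_mul_norm_sq_le hess_cont.continuousOn hK hess_pos
  obtain ⟨m₂, m₂_pos, hess_grad⟩ := hK.exists_forall_le' (a := 0)
    (f := fun x => fderiv ℝ (fderiv ℝ ψ) x (gradient ψ x) (gradient ψ x))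
    ((hess_cont.clm_apply grad_cont).clm_apply grad_cont).continuousOn
    fun x hx => hess_pos x hx _ (by simpa [gradient] using fderiv_ne x hx)
  obtain ⟨M, bilaplace⟩ := hK.exists_bound_of_continuousOn
    (continuous (laplace (dirDerivs b) (laplace (dirDerivs b) (ofReal hψ)))).continuousOn
  set m := min m₁ m₂
  have m_pos : 0 < m := lt_min m₁_pos m₂_pos
  refine ⟨m, m_pos, √(m / (|M| + 1)), by positivity, fun h h_pos h_le u x hx => ?_⟩
  refine mul_sobolevDensity_le b hψ (fun w => ?_) ((min_le_right _ _).trans (hess_grad x hx))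
    (bilaplace x hx) m_pos.le h_pos ?_ u
  · exact le_trans (by gcongr; exact min_le_left _ _) (hess x hx w)
  · calc h ^ 2 * M ≤ m / (|M| + 1) * (|M| + 1) := by
          gcongr
          · exact (norm_nonneg _).trans (bilaplace x hx)
          · exact (Real.le_sqrt' h_pos).1 h_le
          · linarith [le_abs_self M]
      _ = m := div_mul_cancel₀ _ (by positivity)

theorem exists_pos_mul_integral_sobolevDensity_le [FiniteDimensional ℝ E]
    [MeasurableSpace E] [BorelSpace E] (μ : Measure E) [μ.IsAddHaarMeasure] {K : Set E}
    (hK : IsCompact K) (hess_pos : ∀ x ∈ K, ∀ w ≠ 0, 0 < fderiv ℝ (fderiv ℝ ψ) x w w)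
    (fderiv_ne : ∀ x ∈ K, fderiv ℝ ψ x ≠ 0) :
    ∃ m > (0 : ℝ), ∃ h₀ > (0 : ℝ), ∀ h : ℝ, 0 < h → h ≤ h₀ →
      ∀ u : SmoothFun E, tsupport u.1 ⊆ K → m * ∫ x, sobolevDensity b h u x ∂μ ≤
        h ^ 3 * (∫ x, (conjLaplaceCommutator (dirDerivs b) ((h : ℂ)⁻¹ • ofReal hψ) u
          * star u).1 x ∂μ).re := by
  obtain ⟨m, m_pos, h₀, h₀_pos, pointwise⟩ :=
    exists_pos_mul_sobolevDensity_le b hψ hK hess_pos fderiv_ne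
  refine ⟨m, m_pos, h₀, h₀_pos, fun h h_pos h_le u u_supp => ?_⟩
  exact mul_integral_sobolevDensity_le b _ (hK.of_isClosed_subset (isClosed_tsupport _) u_supp)
    fun x hx => pointwise h h_pos h_le u x (u_supp hx)

end CommutatorBound

section RadialWeight

open scoped ContDiff

variable {E : Type*} [NormedAddCommGroup E] [InnerProductSpace ℝ E]

lemma contDiffOn_exp_norm : ContDiffOn ℝ ∞ (fun y : E => Real.exp ‖y‖) {0}ᶜ :=
  fun _ hx => (contDiffAt_norm ℝ hx).exp.contDiffWithinAt

lemma hasFDerivAt_norm_of_ne_zero {x : E} (hx : x ≠ 0) :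
    HasFDerivAt (fun y : E => ‖y‖) (‖x‖⁻¹ • innerSL ℝ x) x := by
  have norm_ne : ‖x‖ ≠ 0 := norm_ne_zero_iff.2 hx
  have sqrt_deriv := (hasStrictFDerivAt_norm_sq x).hasFDerivAt.sqrt (pow_ne_zero 2 norm_ne)
  simp only [Real.sqrt_sq, norm_nonneg] at sqrt_deriv
  convert sqrt_deriv using 1
  rw [two_nsmul, ← two_smul ℝ, smul_smul]
  congr 1
  field_simp

lemma fderiv_exp_norm {x : E} (hx : x ≠ 0) :
    fderiv ℝ (fun y : E => Real.exp ‖y‖) x = (Real.exp ‖x‖ * ‖x‖⁻¹) • innerSL ℝ x := by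
  rw [(hasFDerivAt_norm_of_ne_zero hx).exp.fderiv, smul_smul]

lemma fderiv_exp_norm_ne_zero {x : E} (hx : x ≠ 0) :
    fderiv ℝ (fun y : E => Real.exp ‖y‖) x ≠ 0 := by
  have norm_ne : ‖x‖ ≠ 0 := norm_ne_zero_iff.2 hx
  rw [fderiv_exp_norm hx]
  exact smul_ne_zero (mul_ne_zero (Real.exp_ne_zero _) (inv_ne_zero norm_ne))
    (norm_ne_zero_iff.1 (by rwa [innerSL_apply_norm]))

lemma fderiv_fderiv_exp_norm {x : E} (hx : x ≠ 0) (w : E) :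
    fderiv ℝ (fderiv ℝ fun y : E => Real.exp ‖y‖) x w w =
      Real.exp ‖x‖ / ‖x‖ ^ 3 * (‖x‖ * inner ℝ x w ^ 2 + (‖x‖ ^ 2 * ‖w‖ ^ 2 - inner ℝ x w ^ 2)) := by
  have norm_deriv := hasFDerivAt_norm_of_ne_zero hx
  have norm_ne : ‖x‖ ≠ 0 := norm_ne_zero_iff.2 hx
  have deriv_eq : fderiv ℝ (fun y : E => Real.exp ‖y‖) =ᶠ[nhds x]
      fun y => (Real.exp ‖y‖ * ‖y‖⁻¹) • innerSL ℝ y := by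
    filter_upwards [isOpen_ne.mem_nhds hx] with y hy using fderiv_exp_norm hy
  have second_deriv := (norm_deriv.exp.mul
    ((hasDerivAt_inv norm_ne).comp_hasFDerivAt x norm_deriv)).smul (innerSL ℝ).hasFDerivAt
  rw [deriv_eq.fderiv_eq]
  calc fderiv ℝ (fun y : E => (Real.exp ‖y‖ * ‖y‖⁻¹) • innerSL ℝ y) x w w
    _ = Real.exp ‖x‖ * ‖x‖⁻¹ * inner ℝ w w
        + (Real.exp ‖x‖ * (-(‖x‖ ^ 2)⁻¹ * (‖x‖⁻¹ * inner ℝ x w))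
          + ‖x‖⁻¹ * (Real.exp ‖x‖ * (‖x‖⁻¹ * inner ℝ x w))) * inner ℝ x w :=
      DFunLike.congr_fun (DFunLike.congr_fun second_deriv.fderiv w) w
    _ = _ := by
      rw [real_inner_self_eq_norm_sq]
      field_simp
      ring

lemma fderiv_fderiv_exp_norm_pos {x : E} (hx : x ≠ 0) {w : E} (hw : w ≠ 0) :
    0 < fderiv ℝ (fderiv ℝ fun y : E => Real.exp ‖y‖) x w w := by
  have cauchy_schwarz : inner ℝ x w ^ 2 ≤ ‖x‖ ^ 2 * ‖w‖ ^ 2 := by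
    rw [← mul_pow]
    exact sq_le_sq' (neg_le_of_abs_le (abs_real_inner_le_norm x w)) (real_inner_le_norm x w)
  rw [fderiv_fderiv_exp_norm hx]
  have norm_pos : 0 < ‖x‖ := norm_pos_iff.2 hx
  refine mul_pos (div_pos (Real.exp_pos _) (pow_pos norm_pos 3)) ?_
  obtain inner_eq | inner_ne := eq_or_ne (inner ℝ x w) 0
  · have : 0 < ‖x‖ ^ 2 * ‖w‖ ^ 2 := mul_pos (pow_pos norm_pos 2) (pow_pos (norm_pos_iff.2 hw) 2)
    simpa only [inner_eq, ne_eq, OfNat.ofNat_ne_zero, not_false_eq_true, zero_pow, mul_zero,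
      sub_zero, zero_add]
  · have : 0 < ‖x‖ * inner ℝ x w ^ 2 := mul_pos norm_pos (sq_pos_of_ne_zero inner_ne)
    linarith

end RadialWeight

section Localization

open scoped ContDiff Topology Manifold

lemma exists_contDiff_eventuallyEq {E : Type*} [NormedAddCommGroup E] [NormedSpace ℝ E]
    [FiniteDimensional ℝ E] {φ : E → ℝ} {K U : Set E} (hK : IsCompact K) (hU : IsOpen U)
    (hKU : K ⊆ U) (hφ : ContDiffOn ℝ ∞ φ U) :
    ∃ ψ : E → ℝ, ContDiff ℝ ∞ ψ ∧ ∀ x ∈ K, φ =ᶠ[𝓝 x] ψ := by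
  obtain ⟨L, L_compact, K_subset, L_subset⟩ := exists_compact_between hK hU hKU
  obtain ⟨χ, χ_eq_one, χ_eq_zero, -⟩ :=
    exists_contMDiffMap_one_nhds_of_subset_interior 𝓘(ℝ, E) (n := ⊤) hK.isClosed K_subset
  refine ⟨fun x => χ x * φ x, ?_, fun x hx => ?_⟩
  · refine contDiff_of_contDiffOn_union_of_isOpen (s := U) (t := Lᶜ)
      (χ.contMDiff.contDiff.contDiffOn.mul hφ) ?_ ?_ hU L_compact.isClosed.isOpen_compl
    · exact contDiffOn_const.congr fun x hx => by rw [χ_eq_zero x hx, zero_mul]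
    · exact compl_subset_iff_union.1 (compl_subset_compl.2 L_subset)
  · filter_upwards [eventually_nhdsSet_iff_forall.1 χ_eq_one x hx] with y hy
    rw [hy, one_mul]

lemma lapC_congr {f g : E2 → ℂ} {x : E2} (hfg : f =ᶠ[𝓝 x] g) : lapC f x = lapC g x := by
  refine Finset.sum_congr rfl fun i _ => ?_
  have deriv_eq : (fun y => fderiv ℝ f y (basis2 i)) =ᶠ[𝓝 x] fun y => fderiv ℝ g y (basis2 i) :=
    hfg.fderiv.fun_comp (· (basis2 i))
  rw [deriv_eq.fderiv_eq]

lemma opAstar_eq_opA_neg (h : ℝ) (φ : E2 → ℝ) (u : E2 → ℂ) :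
    opAstar h φ u = opA h (fun y => -φ y) u := by
  ext x
  simp only [opAstar, opA, neg_neg]

lemma opA_apply_of_notMem_tsupport (h : ℝ) (φ : E2 → ℝ) {u : E2 → ℂ} {x : E2}
    (hx : x ∉ tsupport u) : opA h φ u x = 0 := by
  have product_eq : (fun y => (Real.exp (-φ y / h) : ℂ) * u y) =ᶠ[𝓝 x] fun _ => 0 := by
    filter_upwards [notMem_tsupport_iff_eventuallyEq.1 hx] with y hy
    simp [hy]
  rw [opA, lapC_congr product_eq]
  simp [lapC]

lemma tsupport_opA_subset (h : ℝ) (φ : E2 → ℝ) (u : E2 → ℂ) : tsupport (opA h φ u) ⊆ tsupport u :=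
  closure_minimal (fun _ hx => not_not.1 fun notMem => hx (opA_apply_of_notMem_tsupport h φ notMem))
    (isClosed_tsupport u)

lemma tsupport_opAstar_subset (h : ℝ) (φ : E2 → ℝ) (u : E2 → ℂ) :
    tsupport (opAstar h φ u) ⊆ tsupport u := by
  rw [opAstar_eq_opA_neg]
  exact tsupport_opA_subset _ _ _

lemma opA_congr (h : ℝ) {φ ψ : E2 → ℝ} {u : E2 → ℂ} (hφψ : ∀ x ∈ tsupport u, φ =ᶠ[𝓝 x] ψ) :
    opA h φ u = opA h ψ u := by
  ext x
  by_cases hx : x ∈ tsupport u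
  · have product_eq : (fun y => (Real.exp (-φ y / h) : ℂ) * u y) =ᶠ[𝓝 x]
        fun y => (Real.exp (-ψ y / h) : ℂ) * u y := by
      filter_upwards [hφψ x hx] with y hy
      rw [hy]
    rw [opA, opA, lapC_congr product_eq, (hφψ x hx).eq_of_nhds]
  · rw [opA_apply_of_notMem_tsupport h φ hx, opA_apply_of_notMem_tsupport h ψ hx]

lemma opAstar_congr (h : ℝ) {φ ψ : E2 → ℝ} {u : E2 → ℂ} (hφψ : ∀ x ∈ tsupport u, φ =ᶠ[𝓝 x] ψ) :
    opAstar h φ u = opAstar h ψ u := by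
  rw [opAstar_eq_opA_neg, opAstar_eq_opA_neg]
  exact opA_congr h fun x hx => (hφψ x hx).neg

lemma commutator_congr (h : ℝ) {φ ψ : E2 → ℝ} {u : E2 → ℂ}
    (hφψ : ∀ x ∈ tsupport u, φ =ᶠ[𝓝 x] ψ) (x : E2) :
    opAstar h φ (opA h φ u) x - opA h φ (opAstar h φ u) x =
      opAstar h ψ (opA h ψ u) x - opA h ψ (opAstar h ψ u) x := by
  rw [opA_congr h hφψ, opAstar_congr h hφψ,
    opAstar_congr h fun x hx => hφψ x (tsupport_opA_subset h ψ u hx),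
    opA_congr h fun x hx => hφψ x (tsupport_opAstar_subset h ψ u hx)]

end Localization

section Plane

open scoped ContDiff Topology

open SmoothFun

lemma lapC_eq_laplace (f : SmoothFun E2) : lapC f.1 = (laplace (dirDerivs basis2) f).1 := by
  ext x
  simp only [lapC, laplace_apply, AddSubmonoidClass.coe_finsetSum, Finset.sum_apply]
  rfl

variable {ψ : E2 → ℝ} (hψ : ContDiff ℝ ∞ ψ) (h : ℝ) (u : SmoothFun E2)

lemma opA_eq_conjLaplace :
    opA h ψ u.1 =
      (-(h : ℂ) ^ 2 • conjLaplace (dirDerivs basis2) ((h : ℂ)⁻¹ • ofReal hψ) u).1 := by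
  ext x
  have exp_eq : (Real.exp (ψ x / h) : ℂ) = (exp ((h : ℂ)⁻¹ • ofReal hψ)).1 x := by
    simp [SmoothFun.exp, SmoothFun.ofReal, div_eq_inv_mul]
  have product_eq : (fun y => (Real.exp (-ψ y / h) : ℂ) * u.1 y) =
      (exp (-((h : ℂ)⁻¹ • ofReal hψ)) * u).1 := by
    ext y
    simp [SmoothFun.exp, SmoothFun.ofReal, div_eq_inv_mul]
  rw [opA, exp_eq, product_eq, lapC_eq_laplace, ← exp_mul_laplace_exp_neg_mul]
  exact mul_left_comm _ _ _

lemma opAstar_eq_conjLaplace :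
    opAstar h ψ u.1 =
      (-(h : ℂ) ^ 2 • conjLaplace (dirDerivs basis2) (-((h : ℂ)⁻¹ • ofReal hψ)) u).1 := by
  have neg_weight : (h : ℂ)⁻¹ • ofReal hψ.neg = -((h : ℂ)⁻¹ • ofReal hψ) := by
    ext x
    simp [SmoothFun.ofReal]
  rw [opAstar_eq_opA_neg, opA_eq_conjLaplace hψ.neg, neg_weight]

lemma commutator_eq_conjLaplaceCommutator (x : E2) :
    opAstar h ψ (opA h ψ u.1) x - opA h ψ (opAstar h ψ u.1) x =
      (h : ℂ) ^ 4 *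
        (conjLaplaceCommutator (dirDerivs basis2) ((h : ℂ)⁻¹ • ofReal hψ) u).1 x := by
  have coeff : -(h : ℂ) ^ 2 * -(h : ℂ) ^ 2 = (h : ℂ) ^ 4 := by ring
  rw [opA_eq_conjLaplace hψ h u, opAstar_eq_conjLaplace hψ h u, opA_eq_conjLaplace hψ,
    opAstar_eq_conjLaplace hψ, conjLaplace_smul, conjLaplace_smul, smul_smul, smul_smul, coeff]
  exact (mul_sub _ _ _).symm

lemma integral_commutator_mul_star {φ : E2 → ℝ} (hφψ : ∀ x ∈ tsupport u.1, φ =ᶠ[𝓝 x] ψ) :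
    ∫ x, (opAstar h φ (opA h φ u.1) x - opA h φ (opAstar h φ u.1) x) * starRingEnd ℂ (u.1 x) =
      (h : ℂ) ^ 4 * ∫ x,
        (conjLaplaceCommutator (dirDerivs basis2) ((h : ℂ)⁻¹ • ofReal hψ) u * star u).1 x := by
  rw [← integral_const_mul]
  refine integral_congr_ae (.of_forall fun x => ?_)
  simp only [commutator_congr h hφψ, commutator_eq_conjLaplaceCommutator hψ]
  exact mul_assoc _ _ _

theorem stmt7_general {φ : E2 → ℝ} {K U : Set E2} (hK : IsCompact K) (hU : IsOpen U) (hKU : K ⊆ U)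
    (φ_smooth : ContDiffOn ℝ ∞ φ U)
    (hess_pos : ∀ x ∈ K, ∀ w ≠ 0, 0 < fderiv ℝ (fderiv ℝ φ) x w w)
    (fderiv_ne : ∀ x ∈ K, fderiv ℝ φ x ≠ 0) :
    ∃ C₀ > (0 : ℝ), ∃ h₀ > (0 : ℝ), ∀ h : ℝ, 0 < h → h ≤ h₀ →
      ∀ u : E2 → ℂ, ContDiff ℝ ∞ u → tsupport u ⊆ K →
        C₀ * ∫ x : E2, (‖u x‖ ^ 2 + h ^ 2 * gradSq u x) ≤
          (1 / h) * (∫ x : E2, (opAstar h φ (opA h φ u) x - opA h φ (opAstar h φ u) x) *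
            (starRingEnd ℂ) (u x)).re := by
  obtain ⟨ψ, ψ_smooth, φ_eq_ψ⟩ := exists_contDiff_eventuallyEq hK hU hKU φ_smooth
  have hess_eq : ∀ x ∈ K, fderiv ℝ (fderiv ℝ φ) x = fderiv ℝ (fderiv ℝ ψ) x :=
    fun x hx => ((φ_eq_ψ x hx).fderiv (𝕜 := ℝ)).fderiv_eq
  have basis_eq : ⇑(EuclideanSpace.basisFun (Fin 2) ℝ) = basis2 := by
    ext1 i
    simp [basis2]
  obtain ⟨C₀, C₀_pos, h₀, h₀_pos, bound⟩ := exists_pos_mul_integral_sobolevDensity_le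
    (EuclideanSpace.basisFun (Fin 2) ℝ) ψ_smooth volume hK
    (fun x hx => hess_eq x hx ▸ hess_pos x hx)
    (fun x hx => (φ_eq_ψ x hx).fderiv_eq (𝕜 := ℝ) ▸ fderiv_ne x hx)
  refine ⟨C₀, C₀_pos, h₀, h₀_pos, fun h h_pos h_le u u_smooth u_supp => ?_⟩
  rw [basis_eq] at bound
  calc C₀ * ∫ x : E2, (‖u x‖ ^ 2 + h ^ 2 * gradSq u x)
    _ ≤ h ^ 3 * (∫ x, (conjLaplaceCommutator (dirDerivs basis2) ((h : ℂ)⁻¹ • ofReal ψ_smooth)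
          ⟨u, u_smooth⟩ * star ⟨u, u_smooth⟩ : SmoothFun E2).1 x).re :=
      bound h h_pos h_le ⟨u, u_smooth⟩ u_supp
    _ = _ := by
      rw [integral_commutator_mul_star ψ_smooth h ⟨u, u_smooth⟩
        (fun x hx => φ_eq_ψ x (u_supp hx)), ← Complex.ofReal_pow,
        Complex.re_ofReal_mul]
      field_simp

end Plane

theorem stmt7 (r₁ r₂ : ℝ) (hr₁ : 0 < r₁) (hr₁₂ : r₁ < r₂) :
    ∃ c > (0 : ℝ), ∃ d > (0 : ℝ), ∃ C₀ > (0 : ℝ), ∃ h₀ > (0 : ℝ),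
      ∀ h : ℝ, 0 < h → h ≤ h₀ →
        ∀ u : E2 → ℂ, ContDiff ℝ (⊤ : ℕ∞) u → HasCompactSupport u →
          tsupport u ⊆ ball (0 : E2) r₂ \ closedBall (0 : E2) r₁ →
          (1 / h) * (∫ x : E2,
                (opAstar h (fun y => c * Real.exp ‖y‖) (opA h (fun y => c * Real.exp ‖y‖) u) x -
                    opA h (fun y => c * Real.exp ‖y‖) (opAstar h (fun y => c * Real.exp ‖y‖) u) x) *
                  (starRingEnd ℂ) (u x)).re +
              d * ∫ x : E2, ‖opA h (fun y => c * Real.exp ‖y‖) u x‖ ^ 2 ≥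
            C₀ * ∫ x : E2, (‖u x‖ ^ 2 + h ^ 2 * gradSq u x) := by
  have annulus_subset : closedBall (0 : E2) r₂ \ ball 0 r₁ ⊆ {0}ᶜ :=
    fun x hx x_eq => hx.2 (x_eq ▸ mem_ball_self hr₁)
  obtain ⟨C₀, C₀_pos, h₀, h₀_pos, bound⟩ := stmt7_general
    ((isCompact_closedBall (0 : E2) r₂).diff isOpen_ball) isOpen_compl_singleton annulus_subset
    contDiffOn_exp_norm (fun x hx w => fderiv_fderiv_exp_norm_pos (annulus_subset hx))
    (fun x hx => fderiv_exp_norm_ne_zero (annulus_subset hx))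
  refine ⟨1, one_pos, 1, one_pos, C₀, C₀_pos, h₀, h₀_pos, ?_⟩
  intro h h_pos h_le u u_smooth _ u_supp
  have commutator_bound := bound h h_pos h_le u u_smooth
    (u_supp.trans (sdiff_subset_sdiff ball_subset_closedBall ball_subset_closedBall))
  simp only [one_mul]
  exact commutator_bound.trans (le_add_of_nonneg_right (integral_nonneg fun x => sq_nonneg _))
end
end
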